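/- Define the shifted noise coefficients ρ̂_{i,j,r}^{(t)} := ρ_{i,j,r}^{(t)} + y_i·⟨w_r^{(0)}, x_{i,j}⟩/‖x_{i,j}‖₂² and their maximum over unlearnable noise patches ρ̂_max^{(t)} := max over r ∈ [m], k ∈ S_U, q ≠ s(X_k) of ρ̂_{k,q,r}^{(t)}. On the event E, under Condition (H) in the sparse-unlearnable regime, suppose ρ̂_max^{(t)} ≤ C_1/((mP)^{1/3} σ_n² d). Then for every unlearnable sample i ∈ S_U at iteration t, 1/(1 + exp(4C_1³)) ≤ ψ(y_i f_{W^{(t)}}(X̃_i^{(t)})) ≤ 1. -/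

import Mathlib

open Finset MeasureTheory ProbabilityTheory
open scoped ENNReal NNReal

noncomputable section

namespace AD

/-- Cubic ReLU activation. -/
def phi (z : ℝ) : ℝ := (max 0 z) ^ 3

/-- Negative sigmoid `ψ(z) = 1/(1+e^z)`. -/
def psi (z : ℝ) : ℝ := 1 / (1 + Real.exp z)

/-- Logistic loss `ℓ(z) = log(1+e^{-z})`. -/
def lloss (z : ℝ) : ℝ := Real.log (1 + Real.exp (-z))

/-- Logistic sigmoid `σ(z) = 1/(1+e^{-z})`. -/
def sigm (z : ℝ) : ℝ := 1 / (1 + Real.exp (-z))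

/-- Euclidean inner product on `Fin d → ℝ`. -/
def dot {d : ℕ} (a b : Fin d → ℝ) : ℝ := ∑ k, a k * b k

/-- Squared Euclidean norm. -/
def sqnorm {d : ℕ} (a : Fin d → ℝ) : ℝ := dot a a

/-- First standard basis vector `e₁` (the learnable feature `u`). -/
def e1 (d : ℕ) (hd : 0 < d) : Fin d → ℝ := fun k => if k = (⟨0, hd⟩ : Fin d) then 1 else 0

/-- Last standard basis vector `e_d` (the unlearnable feature `v`). -/
def eLast (d : ℕ) (_hd : 0 < d) : Fin d → ℝ := fun k => if (k : ℕ) = d - 1 then 1 else 0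

/-- The two-layer student network
`f_W(X) = ∑_r ∑_p [φ(⟨w_r,x_p⟩) − φ(−⟨w_r,x_p⟩)]`. -/
def netOut {m P d : ℕ} (w : Fin m → Fin d → ℝ) (X : Fin P → Fin d → ℝ) : ℝ :=
  ∑ r, ∑ p, (phi (dot (w r) (X p)) - phi (-(dot (w r) (X p))))

/-- The concentration event `E` of the paper, i.e. properties (P1)–(P8), stated for
training patches `x`, initialization `w0`, labels `y` and signal-patch indices `sig`. -/
def EventEOn (N m P d : ℕ) (hd : 0 < d) (sigman sigma0 delta : ℝ)
    (y : Fin N → ℝ) (sig : Fin N → Fin P)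
    (x : Fin N → Fin P → Fin d → ℝ) (w0 : Fin m → Fin d → ℝ) : Prop :=
  -- (P1) noise-patch norms
  (∀ i j, j ≠ sig i →
      sigman ^ 2 * d / 2 ≤ sqnorm (x i j) ∧ sqnorm (x i j) ≤ 3 * sigman ^ 2 * d / 2) ∧
  -- (P2) pairwise noise inner products
  (∀ i k j q, j ≠ sig i → q ≠ sig k → ((i, j) : Fin N × Fin P) ≠ (k, q) →
      |dot (x i j) (x k q)| ≤
        2 * sigman ^ 2 * Real.sqrt ((d : ℝ) * Real.log ((16 : ℝ) * N ^ 2 * P ^ 2 / delta))) ∧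
  -- (P3) sup-norm of noise patches
  (∀ i j, j ≠ sig i → ∀ kk : Fin d,
      |x i j kk| ≤ sigman * Real.sqrt (2 * Real.log ((16 : ℝ) * d * N * P / delta))) ∧
  -- (P4) initialization norms
  (∀ r, Real.sqrt (sqnorm (w0 r)) ≤ 2 * sigma0 * Real.sqrt d) ∧
  -- (P5) initialization signal correlation
  (∀ r, |dot (w0 r) (e1 d hd)| ≤ sigma0 * Real.sqrt (2 * Real.log ((16 : ℝ) * m / delta))) ∧
  -- (P6) initialization noise correlations
  (∀ r i j, j ≠ sig i →
      |dot (w0 r) (x i j)| ≤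
        2 * sigma0 * sigman * Real.sqrt ((d : ℝ) * Real.log ((16 : ℝ) * N * m * P / delta))) ∧
  -- (P7) maximal initial signal alignment
  (∃ r, sigma0 / 2 ≤ dot (w0 r) (e1 d hd)) ∧
  -- (P8) maximal initial noise alignment
  (∀ i j, j ≠ sig i → ∃ r, sigma0 * sigman * Real.sqrt d / 4 ≤ y i * dot (w0 r) (x i j))
structure Setting where
  N : ℕ
  m : ℕ
  P : ℕ
  d : ℕ
  T : ℕ
  hN : 0 < N
  hm : 0 < m
  hP : 0 < P
  hd : 0 < d
  alpha : ℝ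
  sigman : ℝ
  sigma0 : ℝ
  eta : ℝ
  eps : ℝ
  delta : ℝ
  halpha : 0 < alpha
  hsigman : 0 < sigman
  hsigma0 : 0 < sigma0
  heta : 0 < eta
  heps : 0 < eps
  hepsalpha : eps < alpha
  hdelta0 : 0 < delta
  hdelta1 : delta < 1
  /-- labels -/
  y : Fin N → ℝ
  hy : ∀ i, y i = 1 ∨ y i = -1
  /-- signal patch index -/
  sig : Fin N → Fin P
  /-- learnable samples -/
  SL : Finset (Fin N)
  /-- unlearnable samples -/
  SU : Finset (Fin N)
  hunion : SL ∪ SU = Finset.univ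
  hdisj : Disjoint SL SU
  /-- training patches -/
  x : Fin N → Fin P → Fin d → ℝ
  hsigL : ∀ i ∈ SL, x i (sig i) = (alpha * y i) • e1 d hd
  hsigU : ∀ i ∈ SU, x i (sig i) = (alpha * y i) • eLast d hd
  hnoiseU : ∀ i j, j ≠ sig i → dot (x i j) (e1 d hd) = 0
  hnoiseV : ∀ i j, j ≠ sig i → dot (x i j) (eLast d hd) = 0
  /-- weight trajectory -/
  w : ℕ → Fin m → Fin d → ℝ
  hwperp : ∀ t r, dot (w t r) (eLast d hd) = 0
  /-- adversarial training examples at each iteration -/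
  xadv : ℕ → Fin N → Fin P → Fin d → ℝ
  hadvnoise : ∀ t i j, j ≠ sig i → xadv t i j = x i j
  hadvspan : ∀ t i, ∃ c : ℝ, xadv t i (sig i) - x i (sig i) = c • x i (sig i)
  hadvlinf : ∀ t i p k, |xadv t i p k - x i p k| ≤ eps
  hadvlearn : ∀ t : ℕ, ∀ i ∈ SL,
    alpha - eps ≤ y i * dot (xadv t i (sig i)) (e1 d hd) ∧
      y i * dot (xadv t i (sig i)) (e1 d hd) ≤ alpha

namespace Setting

variable (S : Setting)

/-- Adversarial margin `y_i f_{W^{(t)}}(X̃_i^{(t)})`. -/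
def marg (t : ℕ) (i : Fin S.N) : ℝ := S.y i * netOut (S.w t) (S.xadv t i)

/-- Signal coordinate `w_{r,1}^{(t)}`. -/
def wsig (t : ℕ) (r : Fin S.m) : ℝ := S.w t r ⟨0, S.hd⟩

/-- Unlearnable fraction `p_un = |S_U|/N`. -/
def pun : ℝ := (S.SU.card : ℝ) / S.N

/-- The adversarial-training gradient-descent dynamics. -/
def ATDyn : Prop :=
  ∀ t r, S.w (t + 1) r = S.w t r +
    (3 * S.eta / S.N) •
      ∑ i : Fin S.N, (psi (S.marg t i) * S.y i) •
        ∑ p : Fin S.P, (dot (S.w t r) (S.xadv t i p)) ^ 2 • S.xadv t i p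

/-- The signed gradient weight of sample `i` at iteration `t` under adversarial
distillation from teacher logits `fT`. -/
def gAD (fT : Fin S.N → ℝ) (t : ℕ) (i : Fin S.N) : ℝ :=
  sigm (S.y i * fT i) * psi (S.marg t i) - sigm (-(S.y i * fT i)) * psi (-(S.marg t i))

/-- The adversarial-distillation gradient-descent dynamics. -/
def ADDyn (fT : Fin S.N → ℝ) : Prop :=
  ∀ t r, S.w (t + 1) r = S.w t r +
    (3 * S.eta / S.N) •
      ∑ i : Fin S.N, (S.gAD fT t i * S.y i) •
        ∑ p : Fin S.P, (dot (S.w t r) (S.xadv t i p)) ^ 2 • S.xadv t i p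

/-- Noise coefficients `ρ_{i,j,r}^{(t)}` (adversarial training). -/
def rho (i : Fin S.N) (j : Fin S.P) (r : Fin S.m) : ℕ → ℝ
  | 0 => 0
  | t + 1 => rho i j r t + (3 * S.eta / S.N) * psi (S.marg t i) * (dot (S.w t r) (S.x i j)) ^ 2

/-- Noise coefficients under adversarial distillation. -/
def rhoAD (fT : Fin S.N → ℝ) (i : Fin S.N) (j : Fin S.P) (r : Fin S.m) : ℕ → ℝ
  | 0 => 0
  | t + 1 => rhoAD fT i j r t + (3 * S.eta / S.N) * S.gAD fT t i * (dot (S.w t r) (S.x i j)) ^ 2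

/-- The event `E` for a setting. -/
def EventE : Prop :=
  EventEOn S.N S.m S.P S.d S.hd S.sigman S.sigma0 S.delta S.y S.sig S.x (S.w 0)

/-- Condition (H): the parameter requirements of Condition 4.1 of the paper
(without the unlearnable-fraction regime item, which is imposed separately). -/
def CondH (C : ℝ) : Prop :=
  1 ≤ C ∧
  -- training horizon
  C * S.N / (S.eta * S.sigma0 * S.sigman ^ 3 * ((S.d : ℝ) * Real.sqrt S.d)) ≤ (S.T : ℝ) ∧
  -- dimension
  C * S.m ^ 2 * S.P ^ 2 * S.N ^ 2 *
      (Real.log ((S.T : ℝ) * S.N * S.m * S.P / S.delta)) ^ 4 ≤ (S.d : ℝ) ∧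
  -- signal strength
  C * S.sigman * Real.sqrt S.d * Real.log ((S.T : ℝ) * S.N * S.m * S.P / S.delta) /
      (((S.N : ℝ) * (1 - S.pun)) ^ ((1 : ℝ) / 3)) ≤ S.alpha ∧
  -- initialization scale
  S.sigma0 ≤
    C⁻¹ *
        min (min (1 / ((S.m : ℝ) ^ ((2 : ℝ) / 3) * (S.P : ℝ) ^ ((2 : ℝ) / 3) *
            S.sigman * Real.sqrt S.d))
          (1 / (S.alpha * (S.m : ℝ) ^ ((2 : ℝ) / 3))))
          (1 / (S.sigman * S.m ^ 2 * Real.sqrt S.P * S.d)) /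
      Real.log ((S.T : ℝ) * S.d * S.N * S.m * S.P / S.delta) ∧
  -- learning rate
  S.eta ≤
    C⁻¹ * min (min (1 / (S.alpha ^ 3 * S.sigma0)) (1 / (S.sigman ^ 2 * S.d))) (1 / S.alpha ^ 2) /
      Real.log ((S.T : ℝ) * S.N * S.m * S.P / S.delta) ∧
  -- adversarial budget
  C * S.sigman * S.m * Real.sqrt S.P * Real.log ((S.T : ℝ) * S.d * S.N * S.P / S.delta) ≤ S.eps ∧
  S.eps < C⁻¹ * min S.alpha (1 / (S.m * S.sigma0 * S.d)) ∧
  -- width and number of patches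
  C * Real.log ((S.N : ℝ) * S.P / S.delta) ≤ (S.m : ℝ) ∧
  (S.m : ℝ) ≤ C * Real.log S.d ^ C ∧
  2 ≤ S.P ∧ (S.P : ℝ) ≤ C

/-- The sparse-unlearnable regime of Condition 4.1. -/
def SparseRegime (C : ℝ) : Prop :=
  C / S.N ≤ S.pun ∧ S.pun ≤ C⁻¹ * Real.log S.d / S.N ∧
  C * S.m * S.P * Real.log ((S.T : ℝ) * S.d * S.N * S.m * S.P / S.delta) ≤ (S.N : ℝ)

/-- The noise-stability bound (NS) on learnable samples at iteration `t`. -/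
def NS (t : ℕ) : Prop :=
  ∀ r : Fin S.m, ∀ i ∈ S.SL, ∀ j, j ≠ S.sig i →
    |dot (S.w t r) (S.x i j)| ≤
      3 * S.sigma0 * S.sigman *
          Real.sqrt ((S.d : ℝ) * Real.log ((16 : ℝ) * S.N * S.m * S.P / S.delta)) +
        21 * S.pun * S.N * S.P * Real.log S.T ^ ((1 : ℝ) / 3) / Real.sqrt S.d *
          Real.sqrt (Real.log ((16 : ℝ) * S.N ^ 2 * S.P ^ 2 / S.delta))

/-- The signal-learning hitting time `T₀`. -/
def T0 (C0 : ℝ) : ℕ :=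
  sInf {t : ℕ | ∃ r, C0 / (S.alpha * (S.m : ℝ) ^ ((1 : ℝ) / 3)) < S.wsig t r}

/-- Maximum of the noise coefficients over unlearnable noise patches. -/
def rhoMaxSU (t : ℕ) : ℝ :=
  sSup {z : ℝ | ∃ r : Fin S.m, ∃ k ∈ S.SU, ∃ q, q ≠ S.sig k ∧ z = S.rho k q r t}

/-- Shifted noise coefficients `ρ̂_{i,j,r}^{(t)}`. -/
def rhoHat (i : Fin S.N) (j : Fin S.P) (r : Fin S.m) (t : ℕ) : ℝ :=
  S.rho i j r t + S.y i * dot (S.w 0 r) (S.x i j) / sqnorm (S.x i j)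

/-- Maximum shifted noise coefficient over unlearnable noise patches. -/
def rhoHatMax (t : ℕ) : ℝ :=
  sSup {z : ℝ | ∃ r : Fin S.m, ∃ k ∈ S.SU, ∃ q, q ≠ S.sig k ∧ z = S.rhoHat k q r t}

/-- The noise-memorization hitting time `T₁`. -/
def T1 (C1 : ℝ) : ℕ :=
  sInf {t : ℕ | C1 / (((S.m : ℝ) * S.P) ^ ((1 : ℝ) / 3) * S.sigman ^ 2 * S.d) < S.rhoHatMax t}

/-- The Good-Teacher horizon `T_max`. -/
def Tmax : ℝ :=
  S.N / (1000 * S.eta * S.m * S.P * S.sigma0 ^ 4 * S.sigman ^ 6 * (S.d : ℝ) ^ 3 *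
    Real.log ((16 : ℝ) * S.N * S.m * S.P / S.delta) ^ 2)

end Setting

/-!
The signal patch of an unlearnable sample is orthogonal to every neuron, so its margin is a sum of
`m P` cubes of noise correlations. Each correlation is `ρ̂ ‖x‖²` up to cross terms with the other
noise patches, so a bound `C₁ / ((mP)^{1/3} σ_n² d)` on `ρ̂_max` caps the margin by `4 C₁³` if the
cross terms are small. These also involve the coefficients `ρ` of the learnable samples, which have
to be bounded uniformly in time.

Each positive signal coordinate `u` grows by at least `c g u²` in a step, where `g` is the gradient
mass of the learnable samples, and at most doubles. Telescoping `1 / u` bounds the total mass spent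
after a given time by a multiple of `1 / u` at that time. As long as all signal coordinates are
small, every learnable `ψ` is at least `1/9`, so the mass bound is a bound on the elapsed time, and
the noise correlations stay of the order of their initial values. Once some signal coordinate
exceeds `1 / (α m)`, the mass that is left is at most `16 m / α²`, too little for a noise
coefficient to grow noticeably.
-/

section Scalar

theorem phi_sub_phi_neg (z : ℝ) : phi z - phi (-z) = z ^ 3 := by
  unfold phi
  rcases le_total 0 z with h | h
  · rw [max_eq_right h, max_eq_left (by linarith)]; ring
  · rw [max_eq_left h, max_eq_right (by linarith)]; ring

theorem psi_pos (z : ℝ) : 0 < psi z := by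
  unfold psi; positivity

theorem psi_le_one (z : ℝ) : psi z ≤ 1 := by
  unfold psi
  rw [div_le_one (by positivity)]
  linarith [Real.exp_pos z]

theorem psi_antitone : Antitone psi := fun a b hab => by
  unfold psi
  gcongr

theorem psi_le_exp_neg (z : ℝ) : psi z ≤ Real.exp (-z) := by
  rw [psi, Real.exp_neg, ← one_div]
  exact one_div_le_one_div_of_le (Real.exp_pos z) (by linarith)

theorem exp_two_lt_eight : Real.exp 2 < 8 := by
  have hexp : Real.exp 2 = Real.exp 1 ^ 2 := by rw [← Real.exp_nat_mul]; norm_num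
  rw [hexp]
  nlinarith [Real.exp_one_lt_d9, Real.exp_pos 1]

theorem mul_exp_neg_cube_le (x : ℝ) : x * Real.exp (-(x ^ 3 / 8)) ≤ 2 := by
  rw [Real.exp_neg, ← div_eq_mul_inv, div_le_iff₀ (Real.exp_pos _)]
  have hexp := Real.add_one_le_exp (x ^ 3 / 8)
  rcases le_total x 0 with hx | hx
  · linarith [Real.exp_pos (x ^ 3 / 8)]
  · have hcubic : 0 ≤ (x + 3) * (x - 3 / 2) ^ 2 := by positivity
    linarith

theorem log_sixteen_mul_le {z l : ℝ} (hz : 0 < z) (hzl : Real.log z ≤ l) :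
    Real.log (16 * z) ≤ 3 + l := by
  have hlog : Real.log 16 = 4 * Real.log 2 := by
    rw [show (16 : ℝ) = 2 ^ 4 by norm_num, Real.log_pow]; norm_num
  rw [Real.log_mul (by norm_num) hz.ne', hlog]
  linarith [Real.log_two_lt_d9]

theorem sqrt_le_of_le_sq_mul {a l c : ℝ} (hc : 0 ≤ c) (hl : 1 ≤ l) (h : a ≤ c ^ 2 * l) :
    √a ≤ c * l := by
  refine Real.sqrt_le_iff.2 ⟨by positivity, h.trans ?_⟩
  rw [mul_pow]
  gcongr
  exact le_self_pow₀ hl two_ne_zero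

theorem mul_le_one_of_le_inv_mul_div {x C M l z : ℝ} (hC : 0 < C) (hl : 0 < l) (hz : 0 < z)
    (hx : x ≤ C⁻¹ * M / l) (hM : M ≤ 1 / z) : x * z * l * C ≤ 1 := by
  have hxz : x ≤ 1 / (z * l * C) :=
    calc x ≤ C⁻¹ * M / l := hx
      _ ≤ C⁻¹ * (1 / z) / l := by gcongr
      _ = 1 / (z * l * C) := by field_simp
  rw [le_div_iff₀ (by positivity)] at hxz
  linarith

/-- Each `g s` is paid for by the decrease of `2 / (c * u)` in step `s`, and these decreases
telescope. -/
theorem sum_range_le_of_quadratic_growth {u g : ℕ → ℝ} {c : ℝ} {n : ℕ} (hc : 0 < c)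
    (hu : ∀ s ≤ n, 0 < u s) (hg : ∀ s < n, 0 ≤ g s)
    (hgrow : ∀ s < n, c * g s * u s ^ 2 ≤ u (s + 1) - u s)
    (hdouble : ∀ s < n, u (s + 1) ≤ 2 * u s) :
    ∑ s ∈ range n, g s ≤ 2 / (c * u 0) := by
  have hstep : ∀ s ∈ range n, g s ≤ 2 / (c * u s) - 2 / (c * u (s + 1)) := by
    intro s hs
    have hsn := mem_range.1 hs
    have hu₀ := hu s hsn.le
    have hu₁ := hu (s + 1) hsn
    have hdiff : 2 / (c * u s) - 2 / (c * u (s + 1)) =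
        2 * (u (s + 1) - u s) / (c * u s * u (s + 1)) := by
      field_simp
    rw [hdiff, le_div_iff₀ (by positivity)]
    calc g s * (c * u s * u (s + 1)) ≤ g s * (c * u s * (2 * u s)) := by
          have := hg s hsn
          have := hdouble s hsn
          gcongr
      _ = 2 * (c * g s * u s ^ 2) := by ring
      _ ≤ 2 * (u (s + 1) - u s) := by linarith [hgrow s hsn]
  have hlast : 0 < 2 / (c * u n) := by
    have := hu n le_rfl
    positivity
  calc ∑ s ∈ range n, g s ≤ ∑ s ∈ range n, (2 / (c * u s) - 2 / (c * u (s + 1))) :=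
        sum_le_sum hstep
    _ = 2 / (c * u 0) - 2 / (c * u n) := sum_range_sub' (fun s => 2 / (c * u s)) n
    _ ≤ 2 / (c * u 0) := by linarith

theorem sum_sum_le_of_le {ι κ : Type*} {s : Finset ι} {t : ι → Finset κ} {f : ι → κ → ℝ}
    {c R : ℝ} (hR : 0 ≤ R) (hcard : ∀ i ∈ s, ((t i).card : ℝ) ≤ c)
    (hf : ∀ i ∈ s, ∀ j ∈ t i, f i j ≤ R) :
    ∑ i ∈ s, ∑ j ∈ t i, f i j ≤ s.card * (c * R) := by
  rw [← nsmul_eq_mul]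
  refine sum_le_card_nsmul _ _ _ fun i hi => (sum_le_card_nsmul _ _ _ (hf i hi)).trans ?_
  rw [nsmul_eq_mul]
  exact mul_le_mul_of_nonneg_right (hcard i hi) hR

end Scalar

section Dot

variable {d : ℕ} (a b c : Fin d → ℝ)

theorem dot_comm : dot a b = dot b a := dotProduct_comm a b

theorem add_dot : dot (a + b) c = dot a c + dot b c := add_dotProduct a b c

theorem smul_dot (z : ℝ) : dot (z • a) b = z * dot a b := smul_dotProduct z a b

theorem dot_smul (z : ℝ) : dot a (z • b) = z * dot a b := dotProduct_smul z a b

theorem sum_dot {ι : Type*} (s : Finset ι) (f : ι → Fin d → ℝ) :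
    dot (∑ i ∈ s, f i) c = ∑ i ∈ s, dot (f i) c := sum_dotProduct s f c

theorem dot_e1 (hd : 0 < d) : dot a (e1 d hd) = a ⟨0, hd⟩ := by
  simp [dot, e1]

theorem sqnorm_nonneg : 0 ≤ sqnorm a := by
  unfold sqnorm dot
  exact sum_nonneg fun k _ => mul_self_nonneg (a k)

theorem eLast_zero (hd : 2 ≤ d) : eLast d (by omega) ⟨0, by omega⟩ = 0 := by
  have : ¬ 0 = d - 1 := by omega
  simp [eLast, this]

theorem netOut_eq {m P : ℕ} (w : Fin m → Fin d → ℝ) (X : Fin P → Fin d → ℝ) :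
    netOut w X = ∑ r, ∑ p, dot (w r) (X p) ^ 3 := by
  simp only [netOut, phi_sub_phi_neg]

end Dot

namespace Setting

variable {S : Setting}

theorem one_le_N (S : Setting) : (1 : ℝ) ≤ S.N := by exact_mod_cast S.hN

theorem one_le_m (S : Setting) : (1 : ℝ) ≤ S.m := by exact_mod_cast S.hm

theorem one_le_P (S : Setting) : (1 : ℝ) ≤ S.P := by exact_mod_cast S.hP

theorem one_le_d (S : Setting) : (1 : ℝ) ≤ S.d := by exact_mod_cast S.hd

theorem y_mul_self (i : Fin S.N) : S.y i * S.y i = 1 := by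
  rcases S.hy i with h | h <;> rw [h] <;> norm_num

theorem y_mul_cube (i : Fin S.N) (z : ℝ) : S.y i * z ^ 3 = (S.y i * z) ^ 3 := by
  rcases S.hy i with h | h <;> rw [h] <;> ring

theorem abs_y_mul (i : Fin S.N) (z : ℝ) : |S.y i * z| = |z| := by
  rcases S.hy i with h | h <;> simp [h]

theorem mem_SL_or_SU (i : Fin S.N) : i ∈ S.SL ∨ i ∈ S.SU := by
  rw [← mem_union, S.hunion]
  exact mem_univ i

theorem card_SL_le (S : Setting) : (S.SL.card : ℝ) ≤ S.N := by
  exact_mod_cast (card_le_univ S.SL).trans_eq (Fintype.card_fin S.N)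

theorem card_SL_add_card_SU (S : Setting) : (S.SL.card : ℝ) + S.SU.card = S.N := by
  have h := card_union_of_disjoint S.hdisj
  rw [S.hunion, card_univ, Fintype.card_fin] at h
  exact_mod_cast h.symm

theorem dot_w_e1 (t : ℕ) (r : Fin S.m) : dot (S.w t r) (e1 S.d S.hd) = S.wsig t r :=
  dot_e1 _ _

section Patches

/-- The indices of the noise patches of sample `i`. -/
def noisePatches (S : Setting) (i : Fin S.N) : Finset (Fin S.P) := univ.erase (S.sig i)

theorem mem_noisePatches {i : Fin S.N} {j : Fin S.P} : j ∈ S.noisePatches i ↔ j ≠ S.sig i := by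
  simp [noisePatches]

theorem card_noisePatches_le (i : Fin S.N) : ((S.noisePatches i).card : ℝ) ≤ S.P := by
  exact_mod_cast (card_le_univ (S.noisePatches i)).trans_eq (Fintype.card_fin S.P)

theorem sum_patches {M : Type*} [AddCommMonoid M] (i : Fin S.N) (f : Fin S.P → M) :
    ∑ p, f p = f (S.sig i) + ∑ p ∈ S.noisePatches i, f p :=
  (add_sum_erase univ f (mem_univ _)).symm

/-- The signal strength left in the learnable sample `i` after the attack at iteration `t`: the
label-aligned `e₁`-coordinate of its perturbed signal patch. -/
def advStrength (S : Setting) (t : ℕ) (i : Fin S.N) : ℝ :=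
  S.y i * dot (S.xadv t i (S.sig i)) (e1 S.d S.hd)

theorem xadv_sig_of_mem_SL (t : ℕ) {i : Fin S.N} (hi : i ∈ S.SL) :
    S.xadv t i (S.sig i) = (S.advStrength t i * S.y i) • e1 S.d S.hd := by
  obtain ⟨c, hc⟩ := S.hadvspan t i
  rw [sub_eq_iff_eq_add, S.hsigL i hi, smul_smul, ← add_smul] at hc
  have he1 : dot (e1 S.d S.hd) (e1 S.d S.hd) = 1 := by rw [dot_e1]; simp [e1]
  rw [advStrength, hc, smul_dot, he1]
  congr 1
  linear_combination (-(c * (S.alpha * S.y i) + S.alpha * S.y i)) * S.y_mul_self i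

theorem exists_xadv_sig_of_mem_SU (t : ℕ) {i : Fin S.N} (hi : i ∈ S.SU) :
    ∃ a : ℝ, S.xadv t i (S.sig i) = a • eLast S.d S.hd := by
  obtain ⟨c, hc⟩ := S.hadvspan t i
  rw [sub_eq_iff_eq_add, S.hsigU i hi, smul_smul, ← add_smul] at hc
  exact ⟨_, hc⟩

theorem dot_xadv_sig_noise (t : ℕ) (k i : Fin S.N) {j : Fin S.P} (hj : j ≠ S.sig i) :
    dot (S.xadv t k (S.sig k)) (S.x i j) = 0 := by
  rcases S.mem_SL_or_SU k with hk | hk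
  · rw [xadv_sig_of_mem_SL t hk, smul_dot, dot_comm, S.hnoiseU i j hj, mul_zero]
  · obtain ⟨a, ha⟩ := exists_xadv_sig_of_mem_SU t hk
    rw [ha, smul_dot, dot_comm, S.hnoiseV i j hj, mul_zero]

end Patches

section Margin

/-- The contribution of the noise patches of sample `i` to its margin. -/
def noiseMarg (S : Setting) (t : ℕ) (i : Fin S.N) : ℝ :=
  ∑ r, ∑ q ∈ S.noisePatches i, (S.y i * dot (S.w t r) (S.x i q)) ^ 3

theorem marg_eq (t : ℕ) (i : Fin S.N) :
    S.marg t i = ∑ r, (S.y i * dot (S.w t r) (S.xadv t i (S.sig i))) ^ 3 + S.noiseMarg t i := by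
  rw [marg, netOut_eq, noiseMarg, ← sum_add_distrib, mul_sum]
  refine sum_congr rfl fun r _ => ?_
  rw [sum_patches i, mul_add, y_mul_cube, mul_sum]
  congr 1
  refine sum_congr rfl fun q hq => ?_
  rw [y_mul_cube, S.hadvnoise t i q (mem_noisePatches.1 hq)]

theorem marg_of_mem_SU (t : ℕ) {i : Fin S.N} (hi : i ∈ S.SU) : S.marg t i = S.noiseMarg t i := by
  obtain ⟨a, ha⟩ := exists_xadv_sig_of_mem_SU t hi
  rw [marg_eq, ha]
  simp [dot_smul, S.hwperp]

theorem marg_of_mem_SL (t : ℕ) {i : Fin S.N} (hi : i ∈ S.SL) :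
    S.marg t i = ∑ r, (S.advStrength t i * S.wsig t r) ^ 3 + S.noiseMarg t i := by
  rw [marg_eq, xadv_sig_of_mem_SL t hi]
  congr 1
  refine sum_congr rfl fun r _ => ?_
  rw [dot_smul, dot_w_e1]
  congr 1
  linear_combination (S.advStrength t i * S.wsig t r) * S.y_mul_self i

theorem noiseMarg_le {t : ℕ} {i : Fin S.N} {B : ℝ} (hB : 0 ≤ B)
    (h : ∀ r, ∀ q ∈ S.noisePatches i, S.y i * dot (S.w t r) (S.x i q) ≤ B) :
    S.noiseMarg t i ≤ S.m * S.P * B ^ 3 := by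
  have hsum := sum_sum_le_of_le (s := univ) (pow_nonneg hB 3)
    (fun _ _ => card_noisePatches_le i) fun r _ q hq => (Odd.pow_le_pow (by decide)).2 (h r q hq)
  simpa only [noiseMarg, card_univ, Fintype.card_fin, mul_assoc] using hsum

theorem abs_noiseMarg_le {t : ℕ} {i : Fin S.N} {B : ℝ} (hB : 0 ≤ B)
    (h : ∀ r, ∀ q ∈ S.noisePatches i, |dot (S.w t r) (S.x i q)| ≤ B) :
    |S.noiseMarg t i| ≤ S.m * S.P * B ^ 3 := by
  have hsum := sum_sum_le_of_le (s := univ)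
    (f := fun r q => |(S.y i * dot (S.w t r) (S.x i q)) ^ 3|) (pow_nonneg hB 3)
    (fun _ _ => card_noisePatches_le i) fun r _ q hq => by
      rw [abs_pow, abs_y_mul]
      exact pow_le_pow_left₀ (abs_nonneg _) (h r q hq) 3
  simp only [card_univ, Fintype.card_fin, ← mul_assoc] at hsum
  exact (abs_sum_le_sum_abs _ _).trans
    ((sum_le_sum fun r _ => abs_sum_le_sum_abs _ _).trans hsum)

end Margin

section GradMass

theorem rate_nonneg (S : Setting) : 0 ≤ 3 * S.eta / S.N := by
  have := S.heta
  positivity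

/-- The gradient mass `(3η/N) ∑_{k ∈ S_L} ψ(margin_k)` of the learnable samples at iteration `t`,
which drives the signal coordinates. -/
def gradMass (S : Setting) (t : ℕ) : ℝ :=
  (3 * S.eta / S.N) * ∑ k ∈ S.SL, psi (S.marg t k)

theorem gradMass_nonneg (t : ℕ) : 0 ≤ S.gradMass t :=
  mul_nonneg S.rate_nonneg (sum_nonneg fun _ _ => (psi_pos _).le)

theorem rate_mul_psi_le_gradMass (t : ℕ) {k : Fin S.N} (hk : k ∈ S.SL) :
    3 * S.eta / S.N * psi (S.marg t k) ≤ S.gradMass t :=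
  mul_le_mul_of_nonneg_left
    (single_le_sum (f := fun k => psi (S.marg t k)) (fun _ _ => (psi_pos _).le) hk)
    S.rate_nonneg

theorem gradMass_le {t : ℕ} {c : ℝ} (hc : 0 ≤ c) (h : ∀ k ∈ S.SL, psi (S.marg t k) ≤ c) :
    S.gradMass t ≤ 3 * S.eta * c := by
  have hN := S.one_le_N
  have hsum : ∑ k ∈ S.SL, psi (S.marg t k) ≤ S.N * c :=
    calc ∑ k ∈ S.SL, psi (S.marg t k) ≤ S.SL.card * c := by
          simpa only [nsmul_eq_mul] using sum_le_card_nsmul _ _ _ h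
      _ ≤ S.N * c := mul_le_mul_of_nonneg_right S.card_SL_le hc
  calc S.gradMass t ≤ 3 * S.eta / S.N * (S.N * c) :=
        mul_le_mul_of_nonneg_left hsum S.rate_nonneg
    _ = 3 * S.eta * c := by field_simp

theorem le_gradMass {t : ℕ} {c : ℝ} (h : ∀ k ∈ S.SL, c ≤ psi (S.marg t k)) :
    3 * S.eta / S.N * (S.SL.card * c) ≤ S.gradMass t :=
  mul_le_mul_of_nonneg_left
    (by simpa only [nsmul_eq_mul] using card_nsmul_le_sum _ _ _ h) S.rate_nonneg

end GradMass

section SignalDynamics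

theorem sum_dot_sq_mul_xadv_zero (t : ℕ) (r : Fin S.m) (k : Fin S.N) :
    ∑ p, dot (S.w t r) (S.xadv t k p) ^ 2 * S.xadv t k p ⟨0, S.hd⟩ =
      dot (S.w t r) (S.xadv t k (S.sig k)) ^ 2 * S.xadv t k (S.sig k) ⟨0, S.hd⟩ := by
  rw [sum_patches k, sum_eq_zero, add_zero]
  intro q hq
  rw [S.hadvnoise t k q (mem_noisePatches.1 hq), ← dot_e1 (S.x k q) S.hd,
    S.hnoiseU k q (mem_noisePatches.1 hq), mul_zero]

theorem sum_dot_sq_mul_xadv_zero_of_mem_SL (t : ℕ) (r : Fin S.m) {k : Fin S.N} (hk : k ∈ S.SL) :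
    S.y k * ∑ p, dot (S.w t r) (S.xadv t k p) ^ 2 * S.xadv t k p ⟨0, S.hd⟩ =
      S.advStrength t k ^ 3 * S.wsig t r ^ 2 := by
  have hy : S.y k ^ 4 = 1 := by
    rw [show 4 = 2 * 2 by norm_num, pow_mul, sq (S.y k), y_mul_self, one_pow]
  rw [sum_dot_sq_mul_xadv_zero, xadv_sig_of_mem_SL t hk, dot_smul, dot_w_e1]
  simp only [e1, Pi.smul_apply, if_true, smul_eq_mul, mul_one]
  linear_combination S.advStrength t k ^ 3 * S.wsig t r ^ 2 * hy

theorem sum_dot_sq_mul_xadv_zero_of_mem_SU (hd2 : 2 ≤ S.d) (t : ℕ) (r : Fin S.m) {k : Fin S.N}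
    (hk : k ∈ S.SU) :
    ∑ p, dot (S.w t r) (S.xadv t k p) ^ 2 * S.xadv t k p ⟨0, S.hd⟩ = 0 := by
  obtain ⟨a, ha⟩ := exists_xadv_sig_of_mem_SU t hk
  rw [sum_dot_sq_mul_xadv_zero, ha, Pi.smul_apply, eLast_zero hd2, smul_zero, mul_zero]

theorem wsig_succ (hdyn : S.ATDyn) (hd2 : 2 ≤ S.d) (t : ℕ) (r : Fin S.m) :
    S.wsig (t + 1) r = S.wsig t r +
      (3 * S.eta / S.N) *
        ∑ k ∈ S.SL, psi (S.marg t k) * (S.advStrength t k ^ 3 * S.wsig t r ^ 2) := by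
  have hstep := congrFun (hdyn t r) ⟨0, S.hd⟩
  simp only [Pi.add_apply, Pi.smul_apply, Finset.sum_apply, smul_eq_mul] at hstep
  rw [wsig, hstep]
  congr 2
  rw [← S.hunion, sum_union S.hdisj, sum_eq_zero (s := S.SU), add_zero]
  · refine sum_congr rfl fun k hk => ?_
    rw [mul_assoc, sum_dot_sq_mul_xadv_zero_of_mem_SL t r hk]
  · intro k hk
    rw [sum_dot_sq_mul_xadv_zero_of_mem_SU hd2 t r hk, mul_zero]

theorem half_alpha_le_advStrength (heps : S.eps ≤ S.alpha / 2) (t : ℕ) {k : Fin S.N}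
    (hk : k ∈ S.SL) : S.alpha / 2 ≤ S.advStrength t k := by
  rw [advStrength]
  linarith [(S.hadvlearn t k hk).1]

theorem advStrength_le_alpha (t : ℕ) {k : Fin S.N} (hk : k ∈ S.SL) :
    S.advStrength t k ≤ S.alpha :=
  (S.hadvlearn t k hk).2

theorem mul_gradMass_mul (c z : ℝ) (t : ℕ) :
    c * S.gradMass t * z = (3 * S.eta / S.N) * ∑ k ∈ S.SL, psi (S.marg t k) * (c * z) := by
  rw [gradMass, ← sum_mul]
  ring

theorem le_wsig_succ_sub (hdyn : S.ATDyn) (hd2 : 2 ≤ S.d) (heps : S.eps ≤ S.alpha / 2)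
    (t : ℕ) (r : Fin S.m) :
    S.alpha ^ 3 / 8 * S.gradMass t * S.wsig t r ^ 2 ≤ S.wsig (t + 1) r - S.wsig t r := by
  have hα := S.halpha
  rw [wsig_succ hdyn hd2, add_sub_cancel_left, mul_gradMass_mul]
  refine mul_le_mul_of_nonneg_left (sum_le_sum fun k hk => ?_) S.rate_nonneg
  have hψ := (psi_pos (S.marg t k)).le
  have hcube : (S.alpha / 2) ^ 3 ≤ S.advStrength t k ^ 3 :=
    pow_le_pow_left₀ (by positivity) (half_alpha_le_advStrength heps t hk) 3
  have hα3 : S.alpha ^ 3 / 8 ≤ S.advStrength t k ^ 3 := by linarith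
  gcongr

theorem wsig_succ_sub_le (hdyn : S.ATDyn) (hd2 : 2 ≤ S.d) (t : ℕ) (r : Fin S.m) :
    S.wsig (t + 1) r - S.wsig t r ≤ S.alpha ^ 3 * S.gradMass t * S.wsig t r ^ 2 := by
  rw [wsig_succ hdyn hd2, add_sub_cancel_left, mul_gradMass_mul]
  refine mul_le_mul_of_nonneg_left (sum_le_sum fun k hk => ?_) S.rate_nonneg
  have hψ := (psi_pos (S.marg t k)).le
  have hcube : S.advStrength t k ^ 3 ≤ S.alpha ^ 3 :=
    (Odd.pow_le_pow (by decide)).2 (advStrength_le_alpha t hk)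
  gcongr

theorem wsig_mono (hdyn : S.ATDyn) (hd2 : 2 ≤ S.d) (heps : S.eps ≤ S.alpha / 2)
    (r : Fin S.m) : Monotone fun t => S.wsig t r := by
  refine monotone_nat_of_le_succ fun t => ?_
  have hα := S.halpha
  have hmass := S.gradMass_nonneg t
  have hincr : 0 ≤ S.alpha ^ 3 / 8 * S.gradMass t * S.wsig t r ^ 2 := by positivity
  linarith [le_wsig_succ_sub hdyn hd2 heps t r]

end SignalDynamics

section NoiseCoefficients

theorem rho_succ (i : Fin S.N) (j : Fin S.P) (r : Fin S.m) (t : ℕ) :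
    S.rho i j r (t + 1) = S.rho i j r t +
      (3 * S.eta / S.N) * psi (S.marg t i) * (dot (S.w t r) (S.x i j)) ^ 2 := rfl

theorem rho_mono (i : Fin S.N) (j : Fin S.P) (r : Fin S.m) : Monotone (S.rho i j r) := by
  refine monotone_nat_of_le_succ fun t => le_add_of_nonneg_right ?_
  have hrate := S.rate_nonneg
  have hψ := psi_pos (S.marg t i)
  positivity

theorem rho_nonneg (i : Fin S.N) (j : Fin S.P) (r : Fin S.m) (t : ℕ) : 0 ≤ S.rho i j r t :=
  S.rho_mono i j r (Nat.zero_le t)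

theorem rho_le_of_abs_dot_le {c : ℝ} (i : Fin S.N) (j : Fin S.P) (r : Fin S.m) (t : ℕ)
    (h : ∀ s < t, |dot (S.w s r) (S.x i j)| ≤ c) :
    S.rho i j r t ≤ 3 * S.eta / S.N * t * c ^ 2 := by
  induction t with
  | zero => simp [rho]
  | succ t ih =>
    have hprev := ih fun s hs => h s (hs.trans t.lt_succ_self)
    have hsq : dot (S.w t r) (S.x i j) ^ 2 ≤ c ^ 2 := sq_le_sq' (abs_le.1 (h t t.lt_succ_self)).1
      (abs_le.1 (h t t.lt_succ_self)).2
    have hincr : 3 * S.eta / S.N * psi (S.marg t i) * dot (S.w t r) (S.x i j) ^ 2 ≤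
        3 * S.eta / S.N * 1 * c ^ 2 := by
      have hrate := S.rate_nonneg
      gcongr
      exact psi_le_one _
    rw [rho_succ]
    push_cast
    linarith

theorem rho_add_le {B : ℝ} {k : Fin S.N} (hk : k ∈ S.SL) {q : Fin S.P} (r : Fin S.m) (a n : ℕ)
    (h : ∀ s < n, |dot (S.w (a + s) r) (S.x k q)| ≤ B) :
    S.rho k q r (a + n) ≤ S.rho k q r a + B ^ 2 * ∑ s ∈ range n, S.gradMass (a + s) := by
  induction n with
  | zero => simp
  | succ n ih =>
    have hprev := ih fun s hs => h s (hs.trans n.lt_succ_self)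
    have hsq : dot (S.w (a + n) r) (S.x k q) ^ 2 ≤ B ^ 2 :=
      sq_le_sq' (abs_le.1 (h n n.lt_succ_self)).1 (abs_le.1 (h n n.lt_succ_self)).2
    have hincr := mul_le_mul (rate_mul_psi_le_gradMass (a + n) hk) hsq (sq_nonneg _)
      (S.gradMass_nonneg _)
    rw [sum_range_succ, ← add_assoc, rho_succ, mul_add]
    linarith

theorem dot_w_noise (hdyn : S.ATDyn) (t : ℕ) (r : Fin S.m) (i : Fin S.N) {j : Fin S.P}
    (hj : j ≠ S.sig i) :
    dot (S.w t r) (S.x i j) = dot (S.w 0 r) (S.x i j) +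
      ∑ k, ∑ q ∈ S.noisePatches k, S.y k * S.rho k q r t * dot (S.x k q) (S.x i j) := by
  induction t with
  | zero => simp [rho]
  | succ t ih =>
    rw [hdyn t r, add_dot, ih, smul_dot, sum_dot, add_assoc, mul_sum, ← sum_add_distrib]
    congr 1
    refine sum_congr rfl fun k _ => ?_
    rw [smul_dot, sum_dot, sum_patches k, smul_dot, dot_xadv_sig_noise t k i hj, mul_zero, zero_add,
      mul_sum, mul_sum, ← sum_add_distrib]
    refine sum_congr rfl fun q hq => ?_
    rw [smul_dot, S.hadvnoise t k q (mem_noisePatches.1 hq), rho_succ]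
    ring

/-- The total noise coefficient of neuron `r` over all noise patches; it weighs the cross terms in
the noise correlations of `r`. -/
def rhoSum (S : Setting) (t : ℕ) (r : Fin S.m) : ℝ :=
  ∑ k, ∑ q ∈ S.noisePatches k, S.rho k q r t

theorem rhoSum_le {t : ℕ} {r : Fin S.m} {R U : ℝ} (hR : 0 ≤ R) (hU : 0 ≤ U)
    (hrhoL : ∀ k ∈ S.SL, ∀ q ∈ S.noisePatches k, S.rho k q r t ≤ R)
    (hrhoU : ∀ k ∈ S.SU, ∀ q ∈ S.noisePatches k, S.rho k q r t ≤ U) :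
    S.rhoSum t r ≤ S.N * (S.P * R) + S.SU.card * (S.P * U) := by
  rw [rhoSum, ← S.hunion, sum_union S.hdisj]
  have hL := sum_sum_le_of_le hR (fun k _ => card_noisePatches_le k) hrhoL
  have hcard : (S.SL.card : ℝ) * (S.P * R) ≤ S.N * (S.P * R) :=
    mul_le_mul_of_nonneg_right S.card_SL_le (by positivity)
  exact add_le_add (hL.trans hcard)
    (sum_sum_le_of_le hU (fun k _ => card_noisePatches_le k) hrhoU)

theorem rhoHat_mul_sqnorm {i : Fin S.N} {j : Fin S.P} (h : sqnorm (S.x i j) ≠ 0) (r : Fin S.m)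
    (t : ℕ) :
    S.rhoHat i j r t * sqnorm (S.x i j) =
      S.rho i j r t * sqnorm (S.x i j) + S.y i * dot (S.w 0 r) (S.x i j) := by
  rw [rhoHat]
  field_simp

theorem rhoHat_le_rhoHatMax (t : ℕ) {k : Fin S.N} (hk : k ∈ S.SU) {q : Fin S.P}
    (hq : q ≠ S.sig k) (r : Fin S.m) : S.rhoHat k q r t ≤ S.rhoHatMax t := by
  refine le_csSup (Set.Finite.bddAbove ((Set.finite_range
    fun a : Fin S.m × Fin S.N × Fin S.P => S.rhoHat a.2.1 a.2.2 a.1 t).subset ?_))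
    ⟨r, k, hk, q, hq, rfl⟩
  rintro _ ⟨r, k, -, q, -, rfl⟩
  exact ⟨(r, k, q), rfl⟩

end NoiseCoefficients

/-- Near-orthogonality of the noise at scales `V`, `b`, `κ`: noise patches have squared norm of
order `V`, distinct ones have inner product at most `κ`, the initial weights have correlation at
most `b` with them, and the `N P` cross terms together do not exceed `V`. -/
structure NoiseGeometry (S : Setting) (V b κ : ℝ) : Prop where
  V_pos : 0 < V
  b_pos : 0 < b
  κ_nonneg : 0 ≤ κ
  le_sqnorm : ∀ i j, j ≠ S.sig i → V / 2 ≤ sqnorm (S.x i j)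
  sqnorm_le : ∀ i j, j ≠ S.sig i → sqnorm (S.x i j) ≤ 3 / 2 * V
  cross_le : ∀ i k j q, j ≠ S.sig i → q ≠ S.sig k → ((i, j) : Fin S.N × Fin S.P) ≠ (k, q) →
    |dot (S.x i j) (S.x k q)| ≤ κ
  init_noise_le : ∀ r i j, j ≠ S.sig i → |dot (S.w 0 r) (S.x i j)| ≤ b
  κ_small : S.N * S.P * κ ≤ V

namespace NoiseGeometry

variable {V b κ : ℝ}

theorem sqnorm_pos (h : S.NoiseGeometry V b κ) {i : Fin S.N} {j : Fin S.P} (hj : j ≠ S.sig i) :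
    0 < sqnorm (S.x i j) := by
  linarith [h.V_pos, h.le_sqnorm i j hj]

theorem abs_crossTerm_le (h : S.NoiseGeometry V b κ) {k i : Fin S.N} {q j : Fin S.P}
    (hq : q ≠ S.sig k) (hj : j ≠ S.sig i) (r : Fin S.m) (t : ℕ) :
    |S.y k * S.rho k q r t * dot (S.x k q) (S.x i j) -
        (if ((k, q) : Fin S.N × Fin S.P) = (i, j) then
          S.y i * S.rho i j r t * sqnorm (S.x i j) else 0)| ≤ κ * S.rho k q r t := by
  have hρ := S.rho_nonneg k q r t
  split_ifs with heq
  · obtain ⟨rfl, rfl⟩ := Prod.mk.inj heq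
    rw [sqnorm, sub_self, abs_zero]
    exact mul_nonneg h.κ_nonneg hρ
  · rw [sub_zero, mul_assoc, abs_y_mul, abs_mul, abs_of_nonneg hρ, mul_comm]
    exact mul_le_mul_of_nonneg_right (h.cross_le k i q j hq hj heq) hρ

theorem abs_dot_w_noise_sub_le (h : S.NoiseGeometry V b κ) (hdyn : S.ATDyn) (t : ℕ)
    (r : Fin S.m) {i : Fin S.N} {j : Fin S.P} (hj : j ≠ S.sig i) :
    |dot (S.w t r) (S.x i j) -
        (dot (S.w 0 r) (S.x i j) + S.y i * S.rho i j r t * sqnorm (S.x i j))| ≤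
      κ * S.rhoSum t r := by
  have hself : ∑ k, ∑ q ∈ S.noisePatches k,
      (if ((k, q) : Fin S.N × Fin S.P) = (i, j) then
        S.y i * S.rho i j r t * sqnorm (S.x i j) else 0) =
      S.y i * S.rho i j r t * sqnorm (S.x i j) := by
    rw [sum_eq_single i, sum_eq_single j]
    · simp
    · intro q _ hq; simp [hq]
    · intro hj'; exact absurd (mem_noisePatches.2 hj) hj'
    · intro k _ hk; simp [hk]
    · intro hi; exact absurd (mem_univ i) hi
  rw [dot_w_noise hdyn t r i hj, add_sub_add_left_eq_sub, ← hself, ← sum_sub_distrib,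
    rhoSum, mul_sum]
  refine (abs_sum_le_sum_abs _ _).trans (sum_le_sum fun k _ => ?_)
  rw [← sum_sub_distrib, mul_sum]
  exact (abs_sum_le_sum_abs _ _).trans
    (sum_le_sum fun q hq => h.abs_crossTerm_le (mem_noisePatches.1 hq) hj r t)

theorem κ_mul_rhoSum_le (h : S.NoiseGeometry V b κ) {t : ℕ} {r : Fin S.m} {R U : ℝ}
    (hR : 0 ≤ R) (hU : 0 ≤ U)
    (hrhoL : ∀ k ∈ S.SL, ∀ q ∈ S.noisePatches k, S.rho k q r t ≤ R)
    (hrhoU : ∀ k ∈ S.SU, ∀ q ∈ S.noisePatches k, S.rho k q r t ≤ U) :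
    κ * S.rhoSum t r ≤ V * R + κ * (S.SU.card * S.P * U) := by
  have hsum := mul_le_mul_of_nonneg_left (rhoSum_le hR hU hrhoL hrhoU) h.κ_nonneg
  have hsmall := mul_le_mul_of_nonneg_right h.κ_small hR
  linarith

theorem abs_dot_w_noise_le (h : S.NoiseGeometry V b κ) (hdyn : S.ATDyn) (t : ℕ) (r : Fin S.m)
    {i : Fin S.N} {j : Fin S.P} (hj : j ≠ S.sig i) :
    |dot (S.w t r) (S.x i j)| ≤ b + 3 / 2 * V * S.rho i j r t + κ * S.rhoSum t r := by
  have hdecomp := h.abs_dot_w_noise_sub_le hdyn t r hj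
  have hinit := h.init_noise_le r i j hj
  have hρ := S.rho_nonneg i j r t
  have hself : |S.y i * S.rho i j r t * sqnorm (S.x i j)| ≤ 3 / 2 * V * S.rho i j r t := by
    rw [mul_assoc, abs_y_mul, abs_of_nonneg (mul_nonneg hρ (sqnorm_nonneg _)), mul_comm]
    exact mul_le_mul_of_nonneg_right (h.sqnorm_le i j hj) hρ
  have htri := abs_add_three
    (dot (S.w t r) (S.x i j) -
      (dot (S.w 0 r) (S.x i j) + S.y i * S.rho i j r t * sqnorm (S.x i j)))
    (dot (S.w 0 r) (S.x i j)) (S.y i * S.rho i j r t * sqnorm (S.x i j))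
  rw [add_assoc, sub_add_cancel] at htri
  linarith

theorem y_mul_dot_w_noise_le (h : S.NoiseGeometry V b κ) (hdyn : S.ATDyn) {t : ℕ} {r : Fin S.m}
    {i : Fin S.N} {j : Fin S.P} (hj : j ≠ S.sig i) {H : ℝ} (hH : 0 ≤ H)
    (hhat : S.rhoHat i j r t ≤ H) :
    S.y i * dot (S.w t r) (S.x i j) ≤ 3 / 2 * V * H + κ * S.rhoSum t r := by
  have hdecomp := h.abs_dot_w_noise_sub_le hdyn t r hj
  have hpos := h.sqnorm_pos hj
  have hfactor : S.y i * (dot (S.w t r) (S.x i j) -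
      (dot (S.w 0 r) (S.x i j) + S.y i * S.rho i j r t * sqnorm (S.x i j))) =
      S.y i * dot (S.w t r) (S.x i j) - S.rhoHat i j r t * sqnorm (S.x i j) := by
    rw [rhoHat_mul_sqnorm hpos.ne']
    linear_combination (-(S.rho i j r t * sqnorm (S.x i j))) * S.y_mul_self i
  rw [← abs_y_mul i, hfactor] at hdecomp
  have hmain : S.rhoHat i j r t * sqnorm (S.x i j) ≤ H * (3 / 2 * V) :=
    mul_le_mul hhat (h.sqnorm_le i j hj) hpos.le hH
  linarith [(abs_le.1 hdecomp).2]

theorem rho_le_of_rhoHat_le (h : S.NoiseGeometry V b κ) {t : ℕ} {r : Fin S.m} {i : Fin S.N}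
    {j : Fin S.P} (hj : j ≠ S.sig i) {H : ℝ} (hhat : S.rhoHat i j r t ≤ H) :
    S.rho i j r t ≤ H + 2 * b / V := by
  have hV := h.V_pos
  have hinit := h.init_noise_le r i j hj
  rw [← abs_y_mul i] at hinit
  have hshift : -(2 * b / V) ≤ S.y i * dot (S.w 0 r) (S.x i j) / sqnorm (S.x i j) :=
    calc -(2 * b / V) = -(b / (V / 2)) := by field_simp
      _ ≤ -(b / sqnorm (S.x i j)) :=
        neg_le_neg (div_le_div_of_nonneg_left h.b_pos.le (half_pos hV) (h.le_sqnorm i j hj))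
      _ = -b / sqnorm (S.x i j) := (neg_div _ _).symm
      _ ≤ S.y i * dot (S.w 0 r) (S.x i j) / sqnorm (S.x i j) :=
        div_le_div_of_nonneg_right (abs_le.1 hinit).1 (h.sqnorm_pos hj).le
  rw [rhoHat] at hhat
  linarith

end NoiseGeometry

/-- All noise correlations of the learnable samples are at most `B` at iteration `t`. -/
def LearnableNoiseLE (S : Setting) (B : ℝ) (t : ℕ) : Prop :=
  ∀ k ∈ S.SL, ∀ q ∈ S.noisePatches k, ∀ r, |dot (S.w t r) (S.x k q)| ≤ B

/-- The early phase: before iteration `t` no signal coordinate has exceeded `1 / (α m)`. -/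
def Early (S : Setting) (t : ℕ) : Prop := ∀ s < t, ∀ r, S.alpha * S.wsig s r ≤ 1 / S.m

theorem exists_early_of_not_early {t : ℕ} (ht : ¬ S.Early t) :
    ∃ a < t, S.Early a ∧ ∃ r, 1 / S.m < S.alpha * S.wsig a r := by
  classical
  have hex : ∃ s, s < t ∧ ∃ r, 1 / S.m < S.alpha * S.wsig s r := by
    simpa [Early] using ht
  refine ⟨Nat.find hex, (Nat.find_spec hex).1, fun s hs r => ?_, (Nat.find_spec hex).2⟩
  by_contra hlarge
  exact Nat.find_min hex hs ⟨hs.trans (Nat.find_spec hex).1, r, not_le.1 hlarge⟩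

/-- The conditions under which the learnable signal is learned stably while the learnable noise
correlations are at most `B`: the attack leaves at least half of the signal strength, the negative
initial signal coordinates and the noise each move a margin by at most one, and the step size is
small. -/
structure SignalRegime (S : Setting) (B : ℝ) : Prop where
  B_pos : 0 < B
  two_le_d : 2 ≤ S.d
  eps_le : S.eps ≤ S.alpha / 2
  init_signal : ∀ r, -1 ≤ S.m * (S.alpha * S.wsig 0 r) ^ 3
  noise_cap : S.m * S.P * B ^ 3 ≤ 1
  step_small : 48 * S.eta * S.alpha ^ 2 ≤ 1

namespace SignalRegime

variable {B : ℝ}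

theorem neg_inv_m_le (h : S.SignalRegime B) (hdyn : S.ATDyn) (t : ℕ) {k : Fin S.N}
    (hk : k ∈ S.SL) (r : Fin S.m) : -(S.m : ℝ)⁻¹ ≤ (S.advStrength t k * S.wsig t r) ^ 3 := by
  have hα := S.halpha
  have hm := S.one_le_m
  have ha := half_alpha_le_advStrength h.eps_le t hk
  rcases le_total 0 (S.wsig t r) with hw | hw
  · have hcube : 0 ≤ (S.advStrength t k * S.wsig t r) ^ 3 :=
      pow_nonneg (mul_nonneg (by linarith) hw) 3
    have hinv : 0 ≤ (S.m : ℝ)⁻¹ := by positivity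
    linarith
  · have hwinit : S.alpha * S.wsig 0 r ≤ S.advStrength t k * S.wsig t r :=
      calc S.alpha * S.wsig 0 r ≤ S.alpha * S.wsig t r :=
            mul_le_mul_of_nonneg_left (wsig_mono hdyn h.two_le_d h.eps_le r t.zero_le) hα.le
        _ ≤ S.advStrength t k * S.wsig t r :=
            mul_le_mul_of_nonpos_right (advStrength_le_alpha t hk) hw
    have hcube := (Odd.pow_le_pow (n := 3) (by decide)).2 hwinit
    have hinit : -(S.m : ℝ)⁻¹ ≤ (S.alpha * S.wsig 0 r) ^ 3 := by
      rw [neg_le_iff_add_nonneg, ← mul_nonneg_iff_of_pos_left (zero_lt_one.trans_le hm), mul_add,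
        mul_inv_cancel₀ (by positivity)]
      linarith [h.init_signal r]
    exact hinit.trans hcube

theorem le_sum_signal (h : S.SignalRegime B) (hdyn : S.ATDyn) (t : ℕ) {k : Fin S.N}
    (hk : k ∈ S.SL) {r : Fin S.m} (hr : 0 ≤ S.wsig t r) :
    (S.alpha * S.wsig t r) ^ 3 / 8 - 1 ≤ ∑ r, (S.advStrength t k * S.wsig t r) ^ 3 := by
  have hα := S.halpha
  have hrest : -1 ≤ ∑ r' ∈ univ.erase r, (S.advStrength t k * S.wsig t r') ^ 3 := by
    have hsum := card_nsmul_le_sum (univ.erase r) _ _ fun r' _ => h.neg_inv_m_le hdyn t hk r'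
    rw [nsmul_eq_mul, mul_neg] at hsum
    have hcard : ((univ.erase r).card : ℝ) ≤ S.m := by
      exact_mod_cast (card_le_univ (univ.erase r)).trans_eq (Fintype.card_fin S.m)
    have hone : ((univ.erase r).card : ℝ) * (S.m : ℝ)⁻¹ ≤ 1 :=
      mul_inv_le_one_of_le₀ hcard (by positivity)
    linarith
  have hself : (S.alpha / 2 * S.wsig t r) ^ 3 ≤ (S.advStrength t k * S.wsig t r) ^ 3 := by
    have := half_alpha_le_advStrength h.eps_le t hk
    gcongr
  rw [← add_sum_erase _ _ (mem_univ r)]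
  linarith [show (S.alpha / 2 * S.wsig t r) ^ 3 = (S.alpha * S.wsig t r) ^ 3 / 8 by ring]

theorem abs_noiseMarg_le_one (h : S.SignalRegime B) {t : ℕ} (hN : S.LearnableNoiseLE B t)
    {k : Fin S.N} (hk : k ∈ S.SL) : |S.noiseMarg t k| ≤ 1 :=
  (abs_noiseMarg_le h.B_pos.le fun r q hq => hN k hk q hq r).trans h.noise_cap

theorem psi_marg_le (h : S.SignalRegime B) (hdyn : S.ATDyn) {t : ℕ}
    (hN : S.LearnableNoiseLE B t) {r : Fin S.m} (hr : 0 ≤ S.wsig t r) {k : Fin S.N}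
    (hk : k ∈ S.SL) : psi (S.marg t k) ≤ 8 * Real.exp (-((S.alpha * S.wsig t r) ^ 3 / 8)) := by
  have hmarg : (S.alpha * S.wsig t r) ^ 3 / 8 - 2 ≤ S.marg t k := by
    rw [marg_of_mem_SL t hk]
    linarith [h.le_sum_signal hdyn t hk hr, (abs_le.1 (h.abs_noiseMarg_le_one hN hk)).1]
  calc psi (S.marg t k) ≤ Real.exp (-S.marg t k) := psi_le_exp_neg _
    _ ≤ Real.exp (2 + -((S.alpha * S.wsig t r) ^ 3 / 8)) := Real.exp_le_exp.2 (by linarith)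
    _ = Real.exp 2 * Real.exp (-((S.alpha * S.wsig t r) ^ 3 / 8)) := Real.exp_add _ _
    _ ≤ 8 * Real.exp (-((S.alpha * S.wsig t r) ^ 3 / 8)) := by
      gcongr
      exact exp_two_lt_eight.le

theorem wsig_succ_le_two_mul (h : S.SignalRegime B) (hdyn : S.ATDyn) {t : ℕ}
    (hN : S.LearnableNoiseLE B t) {r : Fin S.m} (hr : 0 ≤ S.wsig t r) :
    S.wsig (t + 1) r ≤ 2 * S.wsig t r := by
  have hα := S.halpha
  have hη := S.heta
  have hmass := gradMass_le (by positivity) fun k hk => h.psi_marg_le hdyn hN hr hk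
  have hincr : S.wsig (t + 1) r - S.wsig t r ≤ S.wsig t r :=
    calc S.wsig (t + 1) r - S.wsig t r ≤ S.alpha ^ 3 * S.gradMass t * S.wsig t r ^ 2 :=
          wsig_succ_sub_le hdyn h.two_le_d t r
      _ ≤ S.alpha ^ 3 * (3 * S.eta * (8 * Real.exp (-((S.alpha * S.wsig t r) ^ 3 / 8)))) *
            S.wsig t r ^ 2 := by gcongr
      _ = 24 * S.eta * S.alpha ^ 2 * S.wsig t r *
            (S.alpha * S.wsig t r * Real.exp (-((S.alpha * S.wsig t r) ^ 3 / 8))) := by ring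
      _ ≤ 24 * S.eta * S.alpha ^ 2 * S.wsig t r * 2 := by
          gcongr
          exact mul_exp_neg_cube_le _
      _ = 48 * S.eta * S.alpha ^ 2 * S.wsig t r := by ring
      _ ≤ S.wsig t r := mul_le_of_le_one_left hr h.step_small
  linarith

theorem sum_gradMass_le (h : S.SignalRegime B) (hdyn : S.ATDyn) {a : ℕ} {r : Fin S.m}
    (hr : 0 < S.wsig a r) (n : ℕ) (hN : ∀ s < n, S.LearnableNoiseLE B (a + s)) :
    ∑ s ∈ range n, S.gradMass (a + s) ≤ 16 / (S.alpha ^ 3 * S.wsig a r) := by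
  have hα := S.halpha
  have hpos : ∀ s, 0 < S.wsig (a + s) r := fun s =>
    hr.trans_le (wsig_mono hdyn h.two_le_d h.eps_le r (Nat.le_add_right a s))
  have htel := sum_range_le_of_quadratic_growth (u := fun s => S.wsig (a + s) r)
    (g := fun s => S.gradMass (a + s)) (n := n) (by positivity : 0 < S.alpha ^ 3 / 8)
    (fun s _ => hpos s) (fun s _ => S.gradMass_nonneg (a + s))
    (fun s _ => le_wsig_succ_sub hdyn h.two_le_d h.eps_le (a + s) r)
    (fun s hs => h.wsig_succ_le_two_mul hdyn (hN s hs) (hpos s).le)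
  refine htel.trans_eq ?_
  rw [add_zero]
  field_simp
  norm_num

theorem sum_signal_le_one (h : S.SignalRegime B) {s : ℕ}
    (hs : ∀ r, S.alpha * S.wsig s r ≤ 1 / S.m) {k : Fin S.N} (hk : k ∈ S.SL) :
    ∑ r, (S.advStrength s k * S.wsig s r) ^ 3 ≤ 1 := by
  have hα := S.halpha
  have hm := S.one_le_m
  have hterm : ∀ r ∈ univ, (S.advStrength s k * S.wsig s r) ^ 3 ≤ (1 / S.m : ℝ) := by
    intro r _
    have hle : S.advStrength s k * S.wsig s r ≤ 1 / S.m := by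
      rcases le_total 0 (S.wsig s r) with hw | hw
      · exact (mul_le_mul_of_nonneg_right (advStrength_le_alpha s hk) hw).trans (hs r)
      · have ha := half_alpha_le_advStrength h.eps_le s hk
        exact (mul_nonpos_of_nonneg_of_nonpos (by linarith) hw).trans (by positivity)
    calc (S.advStrength s k * S.wsig s r) ^ 3 ≤ (1 / S.m : ℝ) ^ 3 :=
          (Odd.pow_le_pow (by decide)).2 hle
      _ ≤ 1 / S.m := pow_le_of_le_one (by positivity)
          ((div_le_one (by positivity)).2 hm) three_ne_zero
  have hsum := sum_le_card_nsmul _ _ _ hterm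
  rwa [nsmul_eq_mul, card_univ, Fintype.card_fin, mul_one_div_cancel (by positivity)] at hsum

theorem one_ninth_le_psi_marg (h : S.SignalRegime B) {s : ℕ}
    (hs : ∀ r, S.alpha * S.wsig s r ≤ 1 / S.m) (hN : S.LearnableNoiseLE B s) {k : Fin S.N}
    (hk : k ∈ S.SL) : 1 / 9 ≤ psi (S.marg s k) := by
  have hmarg : S.marg s k ≤ 2 := by
    rw [marg_of_mem_SL s hk]
    linarith [h.sum_signal_le_one hs hk, (abs_le.1 (h.abs_noiseMarg_le_one hN hk)).2]
  calc (1 : ℝ) / 9 ≤ psi 2 :=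
        one_div_le_one_div_of_le (by positivity) (by linarith [exp_two_lt_eight])
    _ ≤ psi (S.marg s k) := psi_antitone hmarg

end SignalRegime

/-- The scale separation that keeps the learnable noise correlations below `B` forever: in the early
phase signal growth outpaces noise memorization, and once a signal coordinate exceeds `1 / (α m)`
the remaining gradient mass is too small to matter. -/
structure Scales (S : Setting) (V b κ B : ℝ) : Prop
    extends NoiseGeometry S V b κ, SignalRegime S B where
  exists_init_signal : ∃ r, S.sigma0 / 2 ≤ S.wsig 0 r
  b_small : 3 * b ≤ B
  early : 5760 * b * V ≤ S.sigma0 * S.alpha ^ 3 * S.SL.card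
  late : 160 * B * S.m * V ≤ S.alpha ^ 2

namespace Scales

variable {V b κ B : ℝ}

theorem rate_mul_time_le (h : S.Scales V b κ B) (hdyn : S.ATDyn) {t : ℕ} (ht : S.Early t)
    (hN : ∀ s < t, S.LearnableNoiseLE B s) :
    3 * S.eta / S.N * t * (S.sigma0 * S.alpha ^ 3 * S.SL.card) ≤ 288 := by
  have hα := S.halpha
  have hσ := S.hsigma0
  obtain ⟨r, hr⟩ := h.exists_init_signal
  have hmass : t * (3 * S.eta / S.N * (S.SL.card * (1 / 9))) ≤
      ∑ s ∈ range t, S.gradMass (0 + s) := by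
    have hsum := card_nsmul_le_sum (range t) (fun s => S.gradMass (0 + s)) _ fun s hs => by
      rw [zero_add]
      exact le_gradMass fun k hk => h.one_ninth_le_psi_marg (ht s (mem_range.1 hs))
        (hN s (mem_range.1 hs)) hk
    simpa only [nsmul_eq_mul, card_range] using hsum
  have htotal : t * (3 * S.eta / S.N * (S.SL.card * (1 / 9))) ≤
      16 / (S.alpha ^ 3 * (S.sigma0 / 2)) :=
    calc t * (3 * S.eta / S.N * (S.SL.card * (1 / 9))) ≤ ∑ s ∈ range t, S.gradMass (0 + s) := hmass
      _ ≤ 16 / (S.alpha ^ 3 * S.wsig 0 r) :=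
          h.sum_gradMass_le hdyn (by linarith) t fun s hs => by simpa using hN s hs
      _ ≤ 16 / (S.alpha ^ 3 * (S.sigma0 / 2)) := by gcongr
  rw [le_div_iff₀ (by positivity)] at htotal
  linarith

theorem rho_le_and_abs_dot_le_of_early (h : S.Scales V b κ B) (hdyn : S.ATDyn) {t : ℕ}
    (ht : S.Early t) {k : Fin S.N} {q : Fin S.P} (hq : q ∈ S.noisePatches k) (r : Fin S.m) :
    S.rho k q r t ≤ b / (5 * V) ∧ |dot (S.w t r) (S.x k q)| ≤ 2 * b := by
  induction t using Nat.strong_induction_on generalizing k q r with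
  | _ t ih =>
    have hb := h.b_pos
    have hV := h.V_pos
    have hprev : ∀ s < t, ∀ k, ∀ q ∈ S.noisePatches k, ∀ r, |dot (S.w s r) (S.x k q)| ≤ 2 * b :=
      fun s hs k q hq r => (ih s hs (fun s' hs' => ht s' (hs'.trans hs)) hq r).2
    have htime := h.rate_mul_time_le hdyn ht fun s hs k _ q hq r =>
      (hprev s hs k q hq r).trans (by linarith [h.b_small])
    have hρ : ∀ k, ∀ q ∈ S.noisePatches k, S.rho k q r t ≤ b / (5 * V) := by
      intro k q hq
      refine (rho_le_of_abs_dot_le k q r t fun s hs => hprev s hs k q hq r).trans ?_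
      rw [le_div_iff₀ (by positivity)]
      have hearly : 3 * S.eta / S.N * t * (5760 * b * V) ≤ 288 :=
        (mul_le_mul_of_nonneg_left h.early
          (mul_nonneg S.rate_nonneg t.cast_nonneg)).trans htime
      calc 3 * S.eta / S.N * t * (2 * b) ^ 2 * (5 * V) =
            3 * S.eta / S.N * t * (5760 * b * V) * (b / 288) := by ring
        _ ≤ 288 * (b / 288) := by gcongr
        _ = b := by ring
    refine ⟨hρ k q hq, ?_⟩
    have hcross : κ * S.rhoSum t r ≤ V * (b / (5 * V)) := by
      have hsum := sum_sum_le_of_le (s := univ) (by positivity) (fun k _ => card_noisePatches_le k)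
        fun k _ => hρ k
      rw [card_univ, Fintype.card_fin] at hsum
      have hκ := mul_le_mul_of_nonneg_left hsum h.κ_nonneg
      have hsmall := mul_le_mul_of_nonneg_right h.κ_small (by positivity : 0 ≤ b / (5 * V))
      rw [rhoSum]
      linarith
    have hself := mul_le_mul_of_nonneg_left (hρ k q hq) (by positivity : 0 ≤ 3 / 2 * V)
    linarith [h.abs_dot_w_noise_le hdyn t r (mem_noisePatches.1 hq),
      show V * (b / (5 * V)) = b / 5 by field_simp]

theorem rho_le_of_learnableNoiseLE (h : S.Scales V b κ B) (hdyn : S.ATDyn) {t : ℕ}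
    (hN : ∀ s < t, S.LearnableNoiseLE B s) {k : Fin S.N} (hk : k ∈ S.SL) {q : Fin S.P}
    (hq : q ∈ S.noisePatches k) (r : Fin S.m) :
    S.rho k q r t ≤ b / (5 * V) + B / (10 * V) := by
  have hB := h.B_pos
  have hV := h.V_pos
  have hα := S.halpha
  have hm := S.one_le_m
  by_cases ht : S.Early t
  · have hextra : 0 ≤ B / (10 * V) := by positivity
    linarith [(h.rho_le_and_abs_dot_le_of_early hdyn ht hq r).1]
  obtain ⟨a, hat, hearly, r', hr'⟩ := exists_early_of_not_early ht
  obtain ⟨n, rfl⟩ := Nat.exists_eq_add_of_le hat.le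
  have hNn : ∀ s < n, S.LearnableNoiseLE B (a + s) := fun s hs => hN (a + s) (by omega)
  have hpos : 0 < S.wsig a r' :=
    pos_of_mul_pos_right ((by positivity : (0 : ℝ) < 1 / S.m).trans hr') hα.le
  have hmass : ∑ s ∈ range n, S.gradMass (a + s) ≤ 16 * S.m / S.alpha ^ 2 := by
    refine (h.sum_gradMass_le hdyn hpos n hNn).trans ?_
    rw [div_lt_iff₀ (by positivity)] at hr'
    rw [div_le_div_iff₀ (by positivity) (by positivity)]
    calc 16 * S.alpha ^ 2 = 16 * S.alpha ^ 2 * 1 := (mul_one _).symm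
      _ ≤ 16 * S.alpha ^ 2 * (S.alpha * S.wsig a r' * S.m) := by gcongr
      _ = 16 * S.m * (S.alpha ^ 3 * S.wsig a r') := by ring
  have hlate : B ^ 2 * ∑ s ∈ range n, S.gradMass (a + s) ≤ B / (10 * V) := by
    refine (mul_le_mul_of_nonneg_left hmass (sq_nonneg B)).trans ?_
    rw [← mul_div_assoc, div_le_div_iff₀ (by positivity) (by positivity)]
    linarith [mul_le_mul_of_nonneg_left h.late hB.le]
  linarith [(h.rho_le_and_abs_dot_le_of_early hdyn hearly hq r).1,
    rho_add_le hk r a n fun s hs => hNn s hs k hk q hq r]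

theorem κ_mul_rhoSum_le_of_learnableNoiseLE (h : S.Scales V b κ B) (hdyn : S.ATDyn) {t : ℕ}
    {U : ℝ} (hU : 0 ≤ U) (hUB : κ * (S.SU.card * S.P * U) ≤ B / 4)
    (hrho : ∀ k ∈ S.SU, ∀ q ∈ S.noisePatches k, ∀ r, S.rho k q r t ≤ U)
    (hN : ∀ s < t, S.LearnableNoiseLE B s) (r : Fin S.m) :
    κ * S.rhoSum t r ≤ b / 5 + 7 / 20 * B := by
  have hb := h.b_pos
  have hB := h.B_pos
  have hV := h.V_pos
  have hsum := h.κ_mul_rhoSum_le (by positivity) hU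
    (fun k hk q hq => h.rho_le_of_learnableNoiseLE hdyn hN hk hq r)
    (fun k hk q hq => hrho k hk q hq r)
  linarith [show V * (b / (5 * V) + B / (10 * V)) = b / 5 + B / 10 by field_simp]

theorem learnableNoiseLE (h : S.Scales V b κ B) (hdyn : S.ATDyn) {t : ℕ} {U : ℝ} (hU : 0 ≤ U)
    (hUB : κ * (S.SU.card * S.P * U) ≤ B / 4)
    (hrho : ∀ k ∈ S.SU, ∀ q ∈ S.noisePatches k, ∀ r, S.rho k q r t ≤ U) :
    S.LearnableNoiseLE B t := by
  induction t using Nat.strong_induction_on with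
  | _ t ih =>
    have hV := h.V_pos
    have hN : ∀ s < t, S.LearnableNoiseLE B s := fun s hs =>
      ih s hs fun k hk q hq r => (S.rho_mono k q r hs.le).trans (hrho k hk q hq r)
    intro k hk q hq r
    have hself := mul_le_mul_of_nonneg_left (h.rho_le_of_learnableNoiseLE hdyn hN hk hq r)
      (by positivity : 0 ≤ 3 / 2 * V)
    linarith [h.abs_dot_w_noise_le hdyn t r (mem_noisePatches.1 hq), h.b_small,
      h.κ_mul_rhoSum_le_of_learnableNoiseLE hdyn hU hUB hrho hN r,
      show V * (b / (5 * V) + B / (10 * V)) = b / 5 + B / 10 by field_simp]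

theorem marg_le_of_mem_SU (h : S.Scales V b κ B) (hdyn : S.ATDyn) {t : ℕ} {H : ℝ} (hH : 0 ≤ H)
    (hUB : κ * (S.SU.card * S.P * (H + 2 * b / V)) ≤ B / 4)
    (hhat : ∀ k ∈ S.SU, ∀ q ∈ S.noisePatches k, ∀ r, S.rhoHat k q r t ≤ H) {i : Fin S.N}
    (hi : i ∈ S.SU) : S.marg t i ≤ S.m * S.P * (3 / 2 * V * H + B) ^ 3 := by
  have hb := h.b_pos
  have hB := h.B_pos
  have hV := h.V_pos
  have hU : 0 ≤ H + 2 * b / V := by positivity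
  have hrho : ∀ k ∈ S.SU, ∀ q ∈ S.noisePatches k, ∀ r, S.rho k q r t ≤ H + 2 * b / V :=
    fun k hk q hq r => h.rho_le_of_rhoHat_le (mem_noisePatches.1 hq) (hhat k hk q hq r)
  have hN : ∀ s < t, S.LearnableNoiseLE B s := fun s hs => h.learnableNoiseLE hdyn hU hUB
    fun k hk q hq r => (S.rho_mono k q r hs.le).trans (hrho k hk q hq r)
  rw [marg_of_mem_SU t hi]
  refine noiseMarg_le (by positivity) fun r q hq => ?_
  linarith [h.y_mul_dot_w_noise_le hdyn (mem_noisePatches.1 hq) hH (hhat i hi q hq r),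
    h.κ_mul_rhoSum_le_of_learnableNoiseLE hdyn hU hUB hrho hN r, h.b_small]

end Scales

section Parameters

variable {C : ℝ}

/-- The logarithmic factor `log (T N m P / δ)` of Condition (H). -/
def logFactor (S : Setting) : ℝ := Real.log ((S.T : ℝ) * S.N * S.m * S.P / S.delta)

/-- The logarithmic factor `log (T d N m P / δ)` of Condition (H), which includes the dimension. -/
def logFactorDim (S : Setting) : ℝ :=
  Real.log ((S.T : ℝ) * S.d * S.N * S.m * S.P / S.delta)

/-- The cube root of `m P`; correlations of order `1 / widthRoot` over all neurons and patches add
up to a margin of order one. -/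
def widthRoot (S : Setting) : ℝ := ((S.m : ℝ) * S.P) ^ ((1 : ℝ) / 3)

theorem one_le_widthRoot (S : Setting) : 1 ≤ S.widthRoot :=
  Real.one_le_rpow (one_le_mul_of_one_le_of_one_le S.one_le_m S.one_le_P) (by norm_num)

theorem widthRoot_cube (S : Setting) : S.widthRoot ^ 3 = S.m * S.P := by
  rw [widthRoot, ← Real.rpow_natCast, ← Real.rpow_mul (by positivity)]
  norm_num

theorem widthRoot_le (S : Setting) : S.widthRoot ≤ S.m * S.P := by
  rw [← widthRoot_cube]
  exact le_self_pow₀ S.one_le_widthRoot three_ne_zero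

theorem sqrt_d_sq (S : Setting) : √S.d ^ 2 = S.d := Real.sq_sqrt (Nat.cast_nonneg _)

theorem one_le_sqrt_d (S : Setting) : 1 ≤ √S.d := Real.one_le_sqrt.2 S.one_le_d

theorem CondH.one_le_T (hH : S.CondH C) : (1 : ℝ) ≤ S.T := by
  obtain ⟨hC, hT, -⟩ := hH
  have hη := S.heta
  have hσ0 := S.hsigma0
  have hσ := S.hsigman
  have hN := S.one_le_N
  have hd := S.one_le_d
  have hT_pos : (0 : ℝ) < S.T := lt_of_lt_of_le (by positivity) hT
  exact_mod_cast hT_pos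

theorem CondH.two_le_m (hC : 10 ^ 6 ≤ C) (hH : S.CondH C) : (2 : ℝ) ≤ S.m := by
  obtain ⟨-, -, -, -, -, -, -, -, hm, -, hP, -⟩ := hH
  have hδ := S.hdelta0
  have hratio : (2 : ℝ) ≤ S.N * S.P / S.delta := by
    rw [le_div_iff₀ hδ]
    calc 2 * S.delta ≤ 2 * 1 := by linarith [S.hdelta1]
      _ ≤ S.P * S.N := by
        have hP' : (2 : ℝ) ≤ S.P := by exact_mod_cast hP
        gcongr
        exact S.one_le_N
      _ = S.N * S.P := mul_comm _ _
  have hlog : 1 / 2 ≤ Real.log (S.N * S.P / S.delta) := by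
    linarith [Real.log_le_log (by norm_num) hratio, Real.log_two_gt_d9]
  calc (2 : ℝ) ≤ 10 ^ 6 * (1 / 2) := by norm_num
    _ ≤ C * Real.log (S.N * S.P / S.delta) := by gcongr
    _ ≤ S.m := hm

theorem CondH.one_le_logFactor (hC : 10 ^ 6 ≤ C) (hH : S.CondH C) : 1 ≤ S.logFactor := by
  have hδ := S.hdelta0
  have hT := hH.one_le_T
  have hm := hH.two_le_m hC
  obtain ⟨-, -, -, -, -, -, -, -, -, -, hP, -⟩ := hH
  have hP' : (2 : ℝ) ≤ S.P := by exact_mod_cast hP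
  have hprod : (4 : ℝ) ≤ S.T * S.N * S.m * S.P :=
    calc (4 : ℝ) = 1 * 1 * 2 * 2 := by norm_num
      _ ≤ S.T * S.N * S.m * S.P := by
        gcongr
        exact S.one_le_N
  rw [logFactor, Real.le_log_iff_exp_le (by positivity), le_div_iff₀ hδ]
  calc Real.exp 1 * S.delta ≤ Real.exp 1 * 1 := by
        gcongr
        exact S.hdelta1.le
    _ ≤ S.T * S.N * S.m * S.P := by linarith [Real.exp_one_lt_d9]

theorem CondH.logFactor_le_logFactorDim (hH : S.CondH C) : S.logFactor ≤ S.logFactorDim := by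
  have hδ := S.hdelta0
  have hT := hH.one_le_T
  have hN := S.one_le_N
  have hm := S.one_le_m
  have hP := S.one_le_P
  refine Real.log_le_log (by positivity) ?_
  gcongr
  exact le_mul_of_one_le_right (by positivity) S.one_le_d

theorem CondH.mul_logFactor_sq_le_sqrt_d (hC : 10 ^ 6 ≤ C) (hH : S.CondH C) :
    1000 * (S.m * S.P * S.N * S.logFactor ^ 2) ≤ √S.d := by
  obtain ⟨-, -, hdim, -⟩ := hH
  refine Real.le_sqrt_of_sq_le (le_trans ?_ hdim)
  calc (1000 * (S.m * S.P * S.N * S.logFactor ^ 2)) ^ 2 =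
        10 ^ 6 * S.m ^ 2 * S.P ^ 2 * S.N ^ 2 * S.logFactor ^ 4 := by ring
    _ ≤ C * S.m ^ 2 * S.P ^ 2 * S.N ^ 2 * S.logFactor ^ 4 := by gcongr

theorem CondH.sigma0_noise_le (hC : 10 ^ 6 ≤ C) (hH : S.CondH C) :
    S.sigma0 * S.sigman * S.m ^ 2 * S.d * S.logFactor * C ≤ 1 := by
  have hσ0 := S.hsigma0
  have hσ := S.hsigman
  have hL := hH.one_le_logFactor hC
  have hLdim := hH.logFactor_le_logFactorDim
  have hm := S.one_le_m
  have hd := S.one_le_d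
  have hP : 1 ≤ √(S.P : ℝ) := Real.one_le_sqrt.2 S.one_le_P
  obtain ⟨-, -, -, -, hinit, -⟩ := hH
  calc S.sigma0 * S.sigman * S.m ^ 2 * S.d * S.logFactor * C =
        S.sigma0 * (S.sigman * S.m ^ 2 * 1 * S.d) * S.logFactor * C := by ring
    _ ≤ S.sigma0 * (S.sigman * S.m ^ 2 * √S.P * S.d) * S.logFactorDim * C := by gcongr
    _ ≤ 1 := mul_le_one_of_le_inv_mul_div (by linarith) (by linarith) (by positivity) hinit
        (min_le_right _ _)

theorem CondH.sigma0_signal_le (hC : 10 ^ 6 ≤ C) (hH : S.CondH C) :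
    S.m * (S.sigma0 * S.alpha * S.logFactor * C) ^ 3 ≤ 1 := by
  have hσ0 := S.hsigma0
  have hα := S.halpha
  have hL := hH.one_le_logFactor hC
  have hLdim := hH.logFactor_le_logFactorDim
  have hm := S.one_le_m
  obtain ⟨-, -, -, -, hinit, -⟩ := hH
  have hle : S.sigma0 * S.alpha * S.logFactor * C * (S.m : ℝ) ^ ((2 : ℝ) / 3) ≤ 1 :=
    calc S.sigma0 * S.alpha * S.logFactor * C * (S.m : ℝ) ^ ((2 : ℝ) / 3) =
          S.sigma0 * (S.alpha * (S.m : ℝ) ^ ((2 : ℝ) / 3)) * S.logFactor * C := by ring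
      _ ≤ S.sigma0 * (S.alpha * (S.m : ℝ) ^ ((2 : ℝ) / 3)) * S.logFactorDim * C := by gcongr
      _ ≤ 1 := mul_le_one_of_le_inv_mul_div (by linarith) (by linarith) (by positivity) hinit
          ((min_le_left _ _).trans (min_le_right _ _))
  have hpow : ((S.m : ℝ) ^ ((2 : ℝ) / 3)) ^ 3 = (S.m : ℝ) ^ 2 := by
    rw [← Real.rpow_natCast, ← Real.rpow_mul (by positivity)]
    norm_num
  calc S.m * (S.sigma0 * S.alpha * S.logFactor * C) ^ 3 ≤
        S.m ^ 2 * (S.sigma0 * S.alpha * S.logFactor * C) ^ 3 := by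
        gcongr
        exact le_self_pow₀ hm two_ne_zero
    _ = (S.sigma0 * S.alpha * S.logFactor * C * (S.m : ℝ) ^ ((2 : ℝ) / 3)) ^ 3 := by
        rw [mul_pow _ ((S.m : ℝ) ^ ((2 : ℝ) / 3)), hpow, mul_comm]
    _ ≤ 1 := pow_le_one₀ (by positivity) hle

theorem CondH.eta_alpha_le (hC : 10 ^ 6 ≤ C) (hH : S.CondH C) : S.eta * S.alpha ^ 2 * C ≤ 1 := by
  have hη := S.heta
  have hα := S.halpha
  have hL := hH.one_le_logFactor hC
  obtain ⟨-, -, -, -, -, heta, -⟩ := hH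
  calc S.eta * S.alpha ^ 2 * C = S.eta * S.alpha ^ 2 * 1 * C := by ring
    _ ≤ S.eta * S.alpha ^ 2 * S.logFactor * C := by gcongr
    _ ≤ 1 := mul_le_one_of_le_inv_mul_div (by linarith) (by linarith) (by positivity) heta
        (min_le_right _ _)

theorem CondH.eta_sigman_le (hC : 10 ^ 6 ≤ C) (hH : S.CondH C) :
    S.eta * (S.sigman ^ 2 * S.d) ≤ 1 := by
  have hη := S.heta
  have hσ := S.hsigman
  have hd := S.one_le_d
  have hL := hH.one_le_logFactor hC
  obtain ⟨hC1, -, -, -, -, heta, -⟩ := hH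
  calc S.eta * (S.sigman ^ 2 * S.d) = S.eta * (S.sigman ^ 2 * S.d) * 1 * 1 := by ring
    _ ≤ S.eta * (S.sigman ^ 2 * S.d) * S.logFactor * C := by gcongr
    _ ≤ 1 := mul_le_one_of_le_inv_mul_div (by linarith) (by linarith) (by positivity) heta
        ((min_le_left _ _).trans (min_le_right _ _))

theorem CondH.eps_le (hC : 10 ^ 6 ≤ C) (hH : S.CondH C) : S.eps ≤ S.alpha / 2 := by
  obtain ⟨-, -, -, -, -, -, -, heps, -⟩ := hH
  have hα := S.halpha
  have hC_inv : C⁻¹ ≤ 1 / 2 := by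
    rw [inv_le_comm₀ (by linarith) (by norm_num)]
    linarith
  calc S.eps ≤ C⁻¹ * min S.alpha (1 / (S.m * S.sigma0 * S.d)) := heps.le
    _ ≤ 1 / 2 * S.alpha := mul_le_mul hC_inv (min_le_left _ _)
        (le_min hα.le (by have := S.hsigma0; positivity)) (by norm_num)
    _ = S.alpha / 2 := by ring

theorem CondH.sqrt_d_le_T (hC : 10 ^ 6 ≤ C) (hH : S.CondH C) : √S.d ≤ S.T := by
  have hη := S.heta
  have hσ0 := S.hsigma0
  have hσ := S.hsigman
  have hm := S.one_le_m
  have hN := S.one_le_N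
  have hd := S.one_le_d
  have hL := hH.one_le_logFactor hC
  have heta := hH.eta_sigman_le hC
  have hinit : S.sigma0 * S.sigman * S.d ≤ 1 := by
    calc S.sigma0 * S.sigman * S.d = S.sigma0 * S.sigman * 1 ^ 2 * S.d * 1 * 1 := by ring
      _ ≤ S.sigma0 * S.sigman * S.m ^ 2 * S.d * S.logFactor * C := by
        gcongr
        exact hH.1
      _ ≤ 1 := hH.sigma0_noise_le hC
  obtain ⟨hC1, hT, -⟩ := hH
  refine le_trans ?_ hT
  rw [le_div_iff₀ (by positivity)]
  calc √S.d * (S.eta * S.sigma0 * S.sigman ^ 3 * (S.d * √S.d)) =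
        S.eta * (S.sigman ^ 2 * S.d) * (S.sigma0 * S.sigman * √S.d ^ 2) := by ring
    _ = S.eta * (S.sigman ^ 2 * S.d) * (S.sigma0 * S.sigman * S.d) := by rw [sqrt_d_sq]
    _ ≤ 1 * 1 := by gcongr
    _ ≤ C * S.N := by gcongr

theorem CondH.log_d_le (hC : 10 ^ 6 ≤ C) (hH : S.CondH C) :
    Real.log S.d ≤ 2 * S.logFactor := by
  have hδ := S.hdelta0
  have hD := S.one_le_sqrt_d
  rw [← sqrt_d_sq, Real.log_pow, Nat.cast_ofNat]
  refine mul_le_mul_of_nonneg_left (Real.log_le_log (by positivity) ?_) zero_le_two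
  calc √S.d ≤ S.T := hH.sqrt_d_le_T hC
    _ = S.T * 1 * 1 * 1 / 1 := by ring
    _ ≤ S.T * S.N * S.m * S.P / S.delta := by
      have := S.hdelta1.le
      gcongr
      exacts [S.one_le_N, S.one_le_m, S.one_le_P]

theorem SparseRegime.card_SU_mul_le (hC : 0 < C) (hS : S.SparseRegime C) :
    S.SU.card * C ≤ Real.log S.d := by
  obtain ⟨-, hpun, -⟩ := hS
  have hN := S.one_le_N
  rw [pun, div_le_div_iff_of_pos_right (by linarith), ← div_eq_inv_mul, le_div_iff₀ hC] at hpun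
  exact hpun

theorem SparseRegime.logFactor_le_N (hC : 10 ^ 6 ≤ C) (hH : S.CondH C) (hS : S.SparseRegime C) :
    S.logFactor ≤ S.N := by
  obtain ⟨-, -, hN⟩ := hS
  have hL := hH.one_le_logFactor hC
  have hLdim := hH.logFactor_le_logFactorDim
  have hm := S.one_le_m
  have hP := S.one_le_P
  have hC1 := hH.1
  have hLdim_nonneg : 0 ≤ S.logFactorDim := by linarith
  calc S.logFactor ≤ 1 * 1 * 1 * S.logFactorDim := by linarith
    _ ≤ C * S.m * S.P * S.logFactorDim := by gcongr
    _ ≤ S.N := hN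

theorem SparseRegime.one_le_card_SL (hC : 10 ^ 6 ≤ C) (hH : S.CondH C) (hS : S.SparseRegime C) :
    (1 : ℝ) ≤ S.SL.card := by
  have hN := S.one_le_N
  have hcard := S.card_SL_add_card_SU
  have hSU : S.SU.card * C ≤ 2 * S.N := by
    linarith [hS.card_SU_mul_le (by linarith), hH.log_d_le hC, hS.logFactor_le_N hC hH]
  have hSU_ge : (S.SU.card : ℝ) * 4 ≤ S.SU.card * C := by
    gcongr
    linarith
  have hSL : (0 : ℝ) < S.SL.card := by linarith
  exact_mod_cast hSL

theorem SparseRegime.signal_strength (hC : 10 ^ 6 ≤ C) (hH : S.CondH C) (hS : S.SparseRegime C) :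
    C * S.sigman * √S.d * S.logFactor ≤ S.alpha * (S.SL.card : ℝ) ^ ((1 : ℝ) / 3) := by
  have hSL := hS.one_le_card_SL hC hH
  have hN := S.one_le_N
  have hcard : (S.N : ℝ) * (1 - S.pun) = S.SL.card := by
    rw [pun, mul_sub, mul_one, mul_div_cancel₀ _ (by positivity)]
    linarith [S.card_SL_add_card_SU]
  obtain ⟨-, -, -, hα, -⟩ := hH
  rwa [hcard, div_le_iff₀ (by positivity)] at hα

theorem SparseRegime.cube_le_alpha_cube_mul (hC : 10 ^ 6 ≤ C) (hH : S.CondH C)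
    (hS : S.SparseRegime C) :
    (C * S.sigman * √S.d * S.logFactor) ^ 3 ≤ S.alpha ^ 3 * S.SL.card := by
  have hσ := S.hsigman
  have hL := hH.one_le_logFactor hC
  have hcube : ((S.SL.card : ℝ) ^ ((1 : ℝ) / 3)) ^ 3 = S.SL.card := by
    rw [← Real.rpow_natCast, ← Real.rpow_mul (by positivity)]
    norm_num
  refine (pow_le_pow_left₀ (by positivity) (hS.signal_strength hC hH) 3).trans_eq ?_
  rw [mul_pow, hcube]

theorem SparseRegime.sq_le_alpha_sq_mul (hC : 10 ^ 6 ≤ C) (hH : S.CondH C)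
    (hS : S.SparseRegime C) :
    (C * S.sigman * √S.d * S.logFactor) ^ 2 ≤ S.alpha ^ 2 * S.N := by
  have hσ := S.hsigman
  have hL := hH.one_le_logFactor hC
  have hsq : ((S.SL.card : ℝ) ^ ((1 : ℝ) / 3)) ^ 2 ≤ S.N := by
    rw [← Real.rpow_natCast, ← Real.rpow_mul (by positivity)]
    exact (Real.rpow_le_self_of_one_le (hS.one_le_card_SL hC hH) (by norm_num)).trans S.card_SL_le
  refine (pow_le_pow_left₀ (by positivity) (hS.signal_strength hC hH) 2).trans ?_
  rw [mul_pow]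
  gcongr

end Parameters

section Instantiation

variable {C β : ℝ}

/-- The order `σ_n² d` of the squared norm of a noise patch, the scale `V` of `NoiseGeometry`. -/
def normScale (S : Setting) : ℝ := S.sigman ^ 2 * S.d

/-- The bound `b` of `NoiseGeometry` on the initial noise correlations of a neuron. -/
def initScale (S : Setting) : ℝ := 4 * S.sigma0 * S.sigman * √S.d * S.logFactor

/-- The bound `κ` of `NoiseGeometry` on inner products of distinct noise patches. -/
def crossScale (S : Setting) : ℝ := 5 * S.sigman ^ 2 * √S.d * S.logFactor

/-- The cap `B` of `SignalRegime` on learnable noise correlations. Compared with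
`1 / widthRoot`, it is smaller by a factor `m N`, which is what `Scales.late` costs; `β` is a
constant chosen according to `C₁`. -/
def noiseCap (S : Setting) (β : ℝ) : ℝ := β / (S.m * S.widthRoot * S.N)

theorem normScale_pos (S : Setting) : 0 < S.normScale :=
  mul_pos (pow_pos S.hsigman 2) (zero_lt_one.trans_le S.one_le_d)

theorem normScale_eq (S : Setting) : S.normScale = S.sigman ^ 2 * √S.d ^ 2 := by
  rw [normScale, sqrt_d_sq]

theorem CondH.initScale_pos (hC : 10 ^ 6 ≤ C) (hH : S.CondH C) : 0 < S.initScale := by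
  have hσ0 := S.hsigma0
  have hσ := S.hsigman
  have hD := S.one_le_sqrt_d
  have hL := hH.one_le_logFactor hC
  unfold initScale
  positivity

theorem CondH.crossScale_nonneg (hC : 10 ^ 6 ≤ C) (hH : S.CondH C) : 0 ≤ S.crossScale := by
  have hL := hH.one_le_logFactor hC
  unfold crossScale
  positivity

theorem CondH.log_sixteen_mul_div_le (hC : 10 ^ 6 ≤ C) (hH : S.CondH C) {z : ℝ} (hz : 0 < z)
    (hz_le : z ≤ S.T * S.N * S.m * S.P) : Real.log (16 * z / S.delta) ≤ 4 * S.logFactor := by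
  have hδ := S.hdelta0
  have hle : Real.log (z / S.delta) ≤ S.logFactor :=
    Real.log_le_log (by positivity) (by gcongr)
  rw [mul_div_assoc]
  linarith [log_sixteen_mul_le (by positivity) hle, hH.one_le_logFactor hC]

theorem CondH.log_pairs_le (hC : 10 ^ 6 ≤ C) (hH : S.CondH C) :
    Real.log ((16 : ℝ) * S.N ^ 2 * S.P ^ 2 / S.delta) ≤ 5 * S.logFactor := by
  have hδ := S.hdelta0
  have hT := hH.one_le_T
  have hN := S.one_le_N
  have hm := S.one_le_m
  have hP := S.one_le_P
  have hle : (S.N : ℝ) ^ 2 * S.P ^ 2 / S.delta ≤ (S.T * S.N * S.m * S.P / S.delta) ^ 2 := by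
    rw [div_pow]
    gcongr
    · calc (S.N : ℝ) ^ 2 * S.P ^ 2 = ((1 : ℝ) * S.N * 1 * S.P) ^ 2 := by ring
        _ ≤ ((S.T : ℝ) * S.N * S.m * S.P) ^ 2 := by gcongr
    · exact pow_le_of_le_one hδ.le S.hdelta1.le two_ne_zero
  have hlog : Real.log ((S.N : ℝ) ^ 2 * S.P ^ 2 / S.delta) ≤ 2 * S.logFactor :=
    (Real.log_le_log (by positivity) hle).trans_eq (by rw [Real.log_pow, logFactor, Nat.cast_ofNat])
  rw [mul_assoc, mul_div_assoc]
  linarith [log_sixteen_mul_le (by positivity) hlog, hH.one_le_logFactor hC]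

theorem abs_dot_noise_noise_le (hC : 10 ^ 6 ≤ C) (hH : S.CondH C) (hE : S.EventE)
    {i k : Fin S.N} {j q : Fin S.P} (hj : j ≠ S.sig i) (hq : q ≠ S.sig k)
    (hne : ((i, j) : Fin S.N × Fin S.P) ≠ (k, q)) :
    |dot (S.x i j) (S.x k q)| ≤ S.crossScale := by
  obtain ⟨-, hcross, -⟩ := hE
  have hsqrt := sqrt_le_of_le_sq_mul (c := 5 / 2) (by norm_num) (hH.one_le_logFactor hC)
    ((hH.log_pairs_le hC).trans (by linarith [hH.one_le_logFactor hC]))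
  refine (hcross i k j q hj hq hne).trans ?_
  rw [Real.sqrt_mul (Nat.cast_nonneg _), crossScale]
  calc 2 * S.sigman ^ 2 * (√S.d * √(Real.log ((16 : ℝ) * S.N ^ 2 * S.P ^ 2 / S.delta))) ≤
        2 * S.sigman ^ 2 * (√S.d * (5 / 2 * S.logFactor)) := by gcongr
    _ = 5 * S.sigman ^ 2 * √S.d * S.logFactor := by ring

theorem abs_dot_init_noise_le (hC : 10 ^ 6 ≤ C) (hH : S.CondH C) (hE : S.EventE) (r : Fin S.m)
    {i : Fin S.N} {j : Fin S.P} (hj : j ≠ S.sig i) : |dot (S.w 0 r) (S.x i j)| ≤ S.initScale := by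
  obtain ⟨-, -, -, -, -, hinit, -⟩ := hE
  have hσ0 := S.hsigma0
  have hσ := S.hsigman
  have hN := S.one_le_N
  have hm := S.one_le_m
  have hP := S.one_le_P
  have hlog : Real.log (16 * S.N * S.m * S.P / S.delta) ≤ 2 ^ 2 * S.logFactor := by
    rw [show (16 : ℝ) * S.N * S.m * S.P = 16 * (S.N * S.m * S.P) by ring]
    refine (hH.log_sixteen_mul_div_le hC (by positivity) ?_).trans_eq (by norm_num)
    gcongr
    exact le_mul_of_one_le_left (by positivity) hH.one_le_T
  have hsqrt := sqrt_le_of_le_sq_mul zero_le_two (hH.one_le_logFactor hC) hlog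
  refine (hinit r i j hj).trans ?_
  rw [Real.sqrt_mul (Nat.cast_nonneg _), initScale]
  calc 2 * S.sigma0 * S.sigman * (√S.d * √(Real.log (16 * S.N * S.m * S.P / S.delta))) ≤
        2 * S.sigma0 * S.sigman * (√S.d * (2 * S.logFactor)) := by gcongr
    _ = 4 * S.sigma0 * S.sigman * √S.d * S.logFactor := by ring

theorem abs_wsig_zero_le (hC : 10 ^ 6 ≤ C) (hH : S.CondH C) (hE : S.EventE) (r : Fin S.m) :
    |S.wsig 0 r| ≤ 3 * S.sigma0 * S.logFactor := by
  obtain ⟨-, -, -, -, hinit, -⟩ := hE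
  have hσ0 := S.hsigma0
  have hm := S.one_le_m
  have hL := hH.one_le_logFactor hC
  have hlog : Real.log (16 * S.m / S.delta) ≤ 4 * S.logFactor := by
    refine hH.log_sixteen_mul_div_le hC (by positivity) ?_
    calc (S.m : ℝ) = 1 * 1 * S.m * 1 := by ring
      _ ≤ S.T * S.N * S.m * S.P := by
        gcongr
        exacts [hH.one_le_T, S.one_le_N, S.one_le_P]
  have hsqrt : √(2 * Real.log (16 * S.m / S.delta)) ≤ 3 * S.logFactor :=
    sqrt_le_of_le_sq_mul (by norm_num) hL (by linarith)
  rw [← dot_w_e1]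
  calc |dot (S.w 0 r) (e1 S.d S.hd)| ≤ S.sigma0 * √(2 * Real.log (16 * S.m / S.delta)) := hinit r
    _ ≤ S.sigma0 * (3 * S.logFactor) := by gcongr
    _ = 3 * S.sigma0 * S.logFactor := by ring

theorem CondH.mul_le_sqrt_d (hC : 10 ^ 6 ≤ C) (hH : S.CondH C) :
    1000 * (S.m * S.P * S.N) ≤ √S.d := by
  have hL : 1 ≤ S.logFactor ^ 2 := one_le_pow₀ (hH.one_le_logFactor hC)
  calc 1000 * (S.m * S.P * S.N) = 1000 * (S.m * S.P * S.N * (1 : ℝ)) := by rw [mul_one]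
    _ ≤ 1000 * (S.m * S.P * S.N * S.logFactor ^ 2) := by gcongr
    _ ≤ √S.d := hH.mul_logFactor_sq_le_sqrt_d hC

theorem CondH.crossScale_small (hC : 10 ^ 6 ≤ C) (hH : S.CondH C) :
    S.N * S.P * S.crossScale ≤ S.normScale := by
  have hL := hH.one_le_logFactor hC
  have hLsq : S.logFactor ≤ S.logFactor ^ 2 := le_self_pow₀ hL two_ne_zero
  have hdim : 5 * (1 * S.P * S.N * S.logFactor) ≤ √S.d :=
    calc 5 * (1 * S.P * S.N * S.logFactor) ≤ 1000 * (S.m * S.P * S.N * S.logFactor ^ 2) := by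
          gcongr
          · norm_num
          · exact S.one_le_m
      _ ≤ √S.d := hH.mul_logFactor_sq_le_sqrt_d hC
  rw [crossScale, normScale_eq]
  calc S.N * S.P * (5 * S.sigman ^ 2 * √S.d * S.logFactor) =
        S.sigman ^ 2 * √S.d * (5 * (1 * S.P * S.N * S.logFactor)) := by ring
    _ ≤ S.sigman ^ 2 * √S.d * √S.d := by gcongr
    _ = S.sigman ^ 2 * √S.d ^ 2 := by ring

theorem noiseGeometry (hC : 10 ^ 6 ≤ C) (hH : S.CondH C) (hE : S.EventE) :
    S.NoiseGeometry S.normScale S.initScale S.crossScale where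
  V_pos := S.normScale_pos
  b_pos := hH.initScale_pos hC
  κ_nonneg := hH.crossScale_nonneg hC
  le_sqnorm i j hj := (hE.1 i j hj).1
  sqnorm_le i j hj := (hE.1 i j hj).2.trans_eq (by rw [normScale]; ring)
  cross_le _ _ _ _ := abs_dot_noise_noise_le hC hH hE
  init_noise_le r _ _ := abs_dot_init_noise_le hC hH hE r
  κ_small := hH.crossScale_small hC

theorem noiseCap_pos (S : Setting) (hβ : 0 < β) : 0 < S.noiseCap β := by
  have hμ := S.one_le_widthRoot
  have hm := S.one_le_m
  have hN := S.one_le_N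
  unfold noiseCap
  positivity

theorem m_mul_N_mul_noiseCap (S : Setting) (β : ℝ) :
    S.m * S.N * S.noiseCap β = β / S.widthRoot := by
  have hm := S.one_le_m
  have hN := S.one_le_N
  unfold noiseCap
  field_simp

theorem noiseCap_le (S : Setting) (hβ : 0 < β) : S.noiseCap β ≤ β / S.widthRoot := by
  rw [← m_mul_N_mul_noiseCap]
  exact le_mul_of_one_le_left (S.noiseCap_pos hβ).le
    (one_le_mul_of_one_le_of_one_le S.one_le_m S.one_le_N)

theorem noiseCap_cube_le (S : Setting) (hβ : 0 < β) (hβ1 : β ≤ 1) :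
    S.m * S.P * S.noiseCap β ^ 3 ≤ 1 := by
  have hμ := S.one_le_widthRoot
  have hB := (S.noiseCap_pos hβ).le
  rw [← widthRoot_cube, ← mul_pow]
  refine pow_le_one₀ (by positivity) ?_
  rw [mul_comm, ← le_div_iff₀ (by positivity)]
  exact (S.noiseCap_le hβ).trans (by gcongr)

theorem CondH.two_le_d (hC : 10 ^ 6 ≤ C) (hH : S.CondH C) : 2 ≤ S.d := by
  have hD : (2 : ℝ) ≤ √S.d :=
    calc (2 : ℝ) ≤ 1000 * (1 * 1 * 1) := by norm_num
      _ ≤ 1000 * (S.m * S.P * S.N) := by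
        gcongr
        exacts [S.one_le_m, S.one_le_P, S.one_le_N]
      _ ≤ √S.d := hH.mul_le_sqrt_d hC
  have hd : (2 : ℝ) ≤ S.d := by
    rw [← sqrt_d_sq]
    exact hD.trans (le_self_pow₀ S.one_le_sqrt_d two_ne_zero)
  exact_mod_cast hd

theorem neg_one_le_init_signal (hC : 10 ^ 6 ≤ C) (hH : S.CondH C) (hE : S.EventE) (r : Fin S.m) :
    -1 ≤ S.m * (S.alpha * S.wsig 0 r) ^ 3 := by
  have hα := S.halpha
  have hσ0 := S.hsigma0
  have hL := hH.one_le_logFactor hC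
  have hw : |S.alpha * S.wsig 0 r| ≤ S.sigma0 * S.alpha * S.logFactor * C :=
    calc |S.alpha * S.wsig 0 r| = S.alpha * |S.wsig 0 r| := by rw [abs_mul, abs_of_pos hα]
      _ ≤ S.alpha * (3 * S.sigma0 * S.logFactor) := by
        gcongr
        exact abs_wsig_zero_le hC hH hE r
      _ = S.sigma0 * S.alpha * S.logFactor * 3 := by ring
      _ ≤ S.sigma0 * S.alpha * S.logFactor * C := by
        gcongr
        linarith
  refine (abs_le.1 ?_).1
  calc |S.m * (S.alpha * S.wsig 0 r) ^ 3| = S.m * |S.alpha * S.wsig 0 r| ^ 3 := by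
        rw [abs_mul, Nat.abs_cast, abs_pow]
    _ ≤ S.m * (S.sigma0 * S.alpha * S.logFactor * C) ^ 3 := by gcongr
    _ ≤ 1 := hH.sigma0_signal_le hC

theorem signalRegime (hC : 10 ^ 6 ≤ C) (hH : S.CondH C) (hE : S.EventE) (hβ : 0 < β)
    (hβ1 : β ≤ 1) : S.SignalRegime (S.noiseCap β) where
  B_pos := S.noiseCap_pos hβ
  two_le_d := hH.two_le_d hC
  eps_le := hH.eps_le hC
  init_signal := neg_one_le_init_signal hC hH hE
  noise_cap := S.noiseCap_cube_le hβ hβ1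
  step_small := by
    have hη := S.heta
    calc 48 * S.eta * S.alpha ^ 2 = S.eta * S.alpha ^ 2 * 48 := by ring
      _ ≤ S.eta * S.alpha ^ 2 * C := by
        gcongr
        linarith
      _ ≤ 1 := hH.eta_alpha_le hC

theorem CondH.initScale_le_noiseCap (hC : 10 ^ 6 ≤ C) (hH : S.CondH C)
    (hβC : 1 ≤ 20 * (β * C)) : 3 * S.initScale ≤ S.noiseCap β := by
  have hσ0 := S.hsigma0
  have hσ := S.hsigman
  have hm := S.one_le_m
  have hN := S.one_le_N
  have hμ := S.one_le_widthRoot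
  have hμ_le := S.widthRoot_le
  have hL := hH.one_le_logFactor hC
  have hC0 : 0 < C := by linarith
  have hdim : S.m * S.P * S.N ≤ √S.d / 1000 := by
    rw [le_div_iff₀' (by norm_num)]
    exact hH.mul_le_sqrt_d hC
  rw [noiseCap, le_div_iff₀ (by positivity)]
  refine le_of_mul_le_mul_right ?_ hC0
  calc 3 * S.initScale * (S.m * S.widthRoot * S.N) * C ≤
        3 * S.initScale * (S.m * (S.m * S.P) * S.N) * C := by
        have hb := hH.initScale_pos hC
        gcongr
    _ = 12 * (S.sigma0 * S.sigman * S.m * √S.d * S.logFactor * C) * (S.m * S.P * S.N) := by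
        rw [initScale]
        ring
    _ ≤ 12 * (S.sigma0 * S.sigman * S.m ^ 2 * √S.d * S.logFactor * C) * (√S.d / 1000) := by
        gcongr
        exact le_self_pow₀ hm two_ne_zero
    _ = 12 / 1000 * (S.sigma0 * S.sigman * S.m ^ 2 * √S.d ^ 2 * S.logFactor * C) := by ring
    _ ≤ β * C := by
        rw [sqrt_d_sq]
        linarith [hH.sigma0_noise_le hC]

theorem SparseRegime.early_phase_short (hC : 10 ^ 6 ≤ C) (hH : S.CondH C) (hS : S.SparseRegime C) :
    5760 * S.initScale * S.normScale ≤ S.sigma0 * S.alpha ^ 3 * S.SL.card := by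
  have hσ0 := S.hsigma0
  have hσ := S.hsigman
  have hL := hH.one_le_logFactor hC
  have hLpow : S.logFactor ≤ S.logFactor ^ 3 := le_self_pow₀ hL three_ne_zero
  have hCpow : (23040 : ℝ) ≤ C ^ 3 :=
    (by linarith : 23040 ≤ C).trans (le_self_pow₀ (by linarith) three_ne_zero)
  rw [initScale, normScale_eq]
  calc 5760 * (4 * S.sigma0 * S.sigman * √S.d * S.logFactor) * (S.sigman ^ 2 * √S.d ^ 2) =
        S.sigma0 * S.sigman ^ 3 * √S.d ^ 3 * (23040 * S.logFactor) := by ring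
    _ ≤ S.sigma0 * S.sigman ^ 3 * √S.d ^ 3 * (C ^ 3 * S.logFactor ^ 3) := by gcongr
    _ = S.sigma0 * (C * S.sigman * √S.d * S.logFactor) ^ 3 := by ring
    _ ≤ S.sigma0 * (S.alpha ^ 3 * S.SL.card) := by
        gcongr
        exact hS.cube_le_alpha_cube_mul hC hH
    _ = S.sigma0 * S.alpha ^ 3 * S.SL.card := by ring

theorem SparseRegime.late_phase_slow (hC : 10 ^ 6 ≤ C) (hH : S.CondH C) (hS : S.SparseRegime C)
    (hβ1 : β ≤ 1) : 160 * S.noiseCap β * S.m * S.normScale ≤ S.alpha ^ 2 := by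
  have hN := S.one_le_N
  have hV := S.normScale_pos
  have hCL : 160 ≤ (C * S.logFactor) ^ 2 :=
    calc (160 : ℝ) ≤ C * 1 := by linarith
      _ ≤ C * S.logFactor := by
        gcongr
        exact hH.one_le_logFactor hC
      _ ≤ (C * S.logFactor) ^ 2 := le_self_pow₀
        (one_le_mul_of_one_le_of_one_le hH.1 (hH.one_le_logFactor hC)) two_ne_zero
  have hcap : S.m * S.N * S.noiseCap β ≤ 1 := by
    rw [m_mul_N_mul_noiseCap, div_le_one (by linarith [S.one_le_widthRoot])]
    exact hβ1.trans S.one_le_widthRoot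
  refine le_of_mul_le_mul_right ?_ (by linarith : (0 : ℝ) < S.N)
  calc 160 * S.noiseCap β * S.m * S.normScale * S.N =
        160 * S.normScale * (S.m * S.N * S.noiseCap β) := by ring
    _ ≤ 160 * S.normScale * 1 := by gcongr
    _ ≤ (C * S.logFactor) ^ 2 * S.normScale * 1 := by gcongr
    _ = (C * S.sigman * √S.d * S.logFactor) ^ 2 := by
        rw [normScale_eq]
        ring
    _ ≤ S.alpha ^ 2 * S.N := hS.sq_le_alpha_sq_mul hC hH

theorem scales (hC : 10 ^ 6 ≤ C) (hH : S.CondH C) (hE : S.EventE) (hS : S.SparseRegime C)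
    (hβ : 0 < β) (hβ1 : β ≤ 1) (hβC : 1 ≤ 20 * (β * C)) :
    S.Scales S.normScale S.initScale S.crossScale (S.noiseCap β) where
  toNoiseGeometry := noiseGeometry hC hH hE
  toSignalRegime := signalRegime hC hH hE hβ hβ1
  exists_init_signal := by
    obtain ⟨-, -, -, -, -, -, ⟨r, hr⟩, -⟩ := hE
    exact ⟨r, by rwa [dot_w_e1] at hr⟩
  b_small := hH.initScale_le_noiseCap hC hβC
  early := hS.early_phase_short hC hH
  late := hS.late_phase_slow hC hH hβ1

end Instantiation

section Threshold

variable {C C₁ β : ℝ}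

/-- The level of `rhoHatMax` that defines the noise-memorization time `T1`. -/
def memorizationLevel (S : Setting) (C₁ : ℝ) : ℝ := C₁ / (S.widthRoot * S.normScale)

theorem memorizationLevel_pos (S : Setting) (hC₁ : 0 < C₁) : 0 < S.memorizationLevel C₁ :=
  div_pos hC₁ (mul_pos (zero_lt_one.trans_le S.one_le_widthRoot) S.normScale_pos)

theorem normScale_mul_memorizationLevel (S : Setting) (C₁ : ℝ) :
    S.normScale * S.memorizationLevel C₁ = C₁ / S.widthRoot := by
  have hV := S.normScale_pos
  unfold memorizationLevel
  field_simp

theorem noiseCap_le_of_le_div (S : Setting) (hβ : 0 < β) (hβC₁ : β ≤ C₁ / 20) :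
    S.noiseCap β ≤ C₁ / S.widthRoot / 20 := by
  have hμ := S.one_le_widthRoot
  calc S.noiseCap β ≤ β / S.widthRoot := S.noiseCap_le hβ
    _ ≤ C₁ / 20 / S.widthRoot := by gcongr
    _ = C₁ / S.widthRoot / 20 := div_right_comm _ _ _

theorem CondH.two_mul_initScale_div_le (hC : 10 ^ 6 ≤ C) (hH : S.CondH C) (hβ : 0 < β)
    (hβC : 1 ≤ 20 * (β * C)) (hβC₁ : β ≤ C₁ / 20) :
    2 * S.initScale / S.normScale ≤ S.memorizationLevel C₁ := by
  rw [div_le_iff₀' S.normScale_pos, normScale_mul_memorizationLevel]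
  linarith [hH.initScale_le_noiseCap hC hβC, S.noiseCap_le_of_le_div hβ hβC₁,
    hH.initScale_pos hC]

theorem SparseRegime.crossScale_mul_memorizationLevel_le (hC : 10 ^ 6 ≤ C) (hH : S.CondH C)
    (hS : S.SparseRegime C) (hC₁ : 0 < C₁) (hle : C₁ ≤ β * C) :
    S.crossScale * (S.SU.card * S.P * (2 * S.memorizationLevel C₁)) ≤ S.noiseCap β / 4 := by
  have hμ := S.one_le_widthRoot
  have hm := S.one_le_m
  have hN := S.one_le_N
  have hD := S.one_le_sqrt_d
  have hσ := S.hsigman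
  have hL := hH.one_le_logFactor hC
  have hC0 : 0 < C := by linarith
  have hβ : C₁ / C ≤ β := (div_le_iff₀ hC0).2 hle
  have hβ_pos : 0 < β := hβ.trans_lt' (by positivity)
  have hcard : S.SU.card * C ≤ 2 * S.logFactor := (hS.card_SU_mul_le hC0).trans (hH.log_d_le hC)
  have hdim : S.logFactor ^ 2 * S.P / √S.d ≤ 1 / (1000 * (S.m * S.N)) := by
    rw [div_le_div_iff₀ (by positivity) (by positivity)]
    linarith [hH.mul_logFactor_sq_le_sqrt_d hC]
  calc S.crossScale * (S.SU.card * S.P * (2 * S.memorizationLevel C₁)) =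
        10 * (C₁ / C) / S.widthRoot * (S.SU.card * C * S.logFactor * S.P / √S.d) := by
        rw [crossScale, memorizationLevel, normScale_eq]
        field_simp
        ring
    _ ≤ 10 * (C₁ / C) / S.widthRoot * (2 * S.logFactor * S.logFactor * S.P / √S.d) := by gcongr
    _ = 20 * (C₁ / C) / S.widthRoot * (S.logFactor ^ 2 * S.P / √S.d) := by ring
    _ ≤ 20 * β / S.widthRoot * (1 / (1000 * (S.m * S.N))) := by gcongr
    _ = S.noiseCap β / 50 := by
        rw [noiseCap]
        field_simp
        ring
    _ ≤ S.noiseCap β / 4 := by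
        have hB := S.noiseCap_pos hβ_pos
        gcongr
        norm_num

theorem mul_cube_memorizationLevel_le (S : Setting) (hC₁ : 0 < C₁) (hβ : 0 < β)
    (hβC₁ : β ≤ C₁ / 20) :
    S.m * S.P * (3 / 2 * S.normScale * S.memorizationLevel C₁ + S.noiseCap β) ^ 3 ≤
      4 * C₁ ^ 3 := by
  have hμ := S.one_le_widthRoot
  have hV := S.normScale_pos
  have hB := S.noiseCap_pos hβ
  have hH := S.memorizationLevel_pos hC₁
  have hcorr : 3 / 2 * S.normScale * S.memorizationLevel C₁ + S.noiseCap β ≤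
      31 / 20 * (C₁ / S.widthRoot) := by
    rw [mul_assoc, normScale_mul_memorizationLevel]
    linarith [S.noiseCap_le_of_le_div hβ hβC₁]
  calc _ ≤ S.m * S.P * (31 / 20 * (C₁ / S.widthRoot)) ^ 3 := by gcongr
    _ = (31 / 20) ^ 3 * C₁ ^ 3 := by
        rw [← widthRoot_cube]
        field_simp
    _ ≤ 4 * C₁ ^ 3 := by
        gcongr
        norm_num

theorem marg_le_of_rhoHatMax_le (hC : 10 ^ 6 ≤ C) (hC₁ : C⁻¹ ≤ C₁) (hle : C₁ ≤ C)
    (hdyn : S.ATDyn) (hE : S.EventE) (hH : S.CondH C) (hS : S.SparseRegime C) {t : ℕ}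
    (hmax : S.rhoHatMax t ≤ S.memorizationLevel C₁) {i : Fin S.N} (hi : i ∈ S.SU) :
    S.marg t i ≤ 4 * C₁ ^ 3 := by
  have hC0 : 0 < C := by linarith
  have hC₁_pos : 0 < C₁ := (inv_pos.2 hC0).trans_le hC₁
  have hlevel := S.memorizationLevel_pos hC₁_pos
  have hκ := hH.crossScale_nonneg hC
  have hCC₁ : 1 ≤ C₁ * C := (inv_le_iff_one_le_mul₀ hC0).1 hC₁
  obtain ⟨β, hβ, hβ1, hβC₁, hβC, hleβ⟩ :
      ∃ β, 0 < β ∧ β ≤ 1 ∧ β ≤ C₁ / 20 ∧ 1 ≤ 20 * (β * C) ∧ C₁ ≤ β * C := by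
    refine ⟨min 1 (C₁ / 20), by positivity, min_le_left _ _, min_le_right _ _, ?_, ?_⟩
    all_goals rw [min_mul_of_nonneg _ _ hC0.le]
    · rw [mul_min_of_nonneg _ _ (by norm_num)]
      exact le_min (by linarith) (by linarith)
    · exact le_min (by linarith) (by nlinarith)
  refine ((scales hC hH hE hS hβ hβ1 hβC).marg_le_of_mem_SU hdyn hlevel.le ?_ (fun k hk q hq r =>
    (rhoHat_le_rhoHatMax t hk (mem_noisePatches.1 hq) r).trans hmax) hi).trans
    (S.mul_cube_memorizationLevel_le hC₁_pos hβ hβC₁)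
  refine le_trans ?_ (hS.crossScale_mul_memorizationLevel_le hC hH hC₁_pos hleβ)
  gcongr
  linarith [hH.two_mul_initScale_div_le hC hβ hβC hβC₁]

end Threshold

end Setting

theorem stmt12_general {C₁ C : ℝ} (hC : 10 ^ 6 ≤ C) (hC₁ : C⁻¹ ≤ C₁) (hle : C₁ ≤ C) (S : Setting)
    (hdyn : S.ATDyn) (hE : S.EventE) (hH : S.CondH C) (hS : S.SparseRegime C) (t : ℕ)
    (hmax : S.rhoHatMax t ≤ C₁ / (((S.m : ℝ) * S.P) ^ ((1 : ℝ) / 3) * S.sigman ^ 2 * S.d))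
    (i : Fin S.N) (hi : i ∈ S.SU) :
    1 / (1 + Real.exp (4 * C₁ ^ 3)) ≤ psi (S.marg t i) ∧ psi (S.marg t i) ≤ 1 := by
  rw [mul_assoc] at hmax
  exact ⟨psi_antitone (Setting.marg_le_of_rhoHatMax_le hC hC₁ hle hdyn hE hH hS hmax hi),
    psi_le_one _⟩

/-- Gradient bound on unlearnable samples. On the event `E`, under
Condition (H) in the sparse-unlearnable regime, if the maximum shifted noise
coefficient is at most `C₁/((mP)^{1/3} σ_n² d)`, then on every unlearnable sample the
negative sigmoid of the adversarial margin lies in `[1/(1+exp(4C₁³)), 1]`. -/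
theorem stmt12 :
    ∃ C1 C : ℝ, 0 < C1 ∧ 0 < C ∧
      ∀ S : Setting, S.ATDyn → S.EventE → S.CondH C → S.SparseRegime C →
        ∀ t : ℕ,
          S.rhoHatMax t ≤ C1 / (((S.m : ℝ) * S.P) ^ ((1 : ℝ) / 3) * S.sigman ^ 2 * S.d) →
          ∀ i ∈ S.SU,
            1 / (1 + Real.exp (4 * C1 ^ 3)) ≤ psi (S.marg t i) ∧ psi (S.marg t i) ≤ 1 :=
  ⟨1, 10 ^ 6, one_pos, by norm_num,
    stmt12_general le_rfl (by norm_num) (by norm_num)⟩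

end AD

end
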